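/- arXiv:1305.5067 — 10 statements merged into one kernel-verified Lean document; each statement's English description precedes it below -/
import Mathlib

section
/- Let μ be a σ-finite measure on ℝ, Θ ⊆ ℝ, θ₀ an interior point of Θ, and g : ℝ × Θ → [0,∞) a θ-parametric family of densities with respect to μ. Assume there exist a bounded neighborhood Θ₀ of θ₀ and a μ-integrable function H with g(x;θ) ≤ H(x) for all x ∈ ℝ and θ ∈ Θ₀. Assume moreover that the support S = {x : g(x;θ) > 0} does not depend on θ. Let X be a real random variable with P(X ∈ S) > 0 such that E[𝒯_{θ₀}(f,g)(X)] = 0 for every f : ℝ × Θ → ℝ satisfying, on some neighborhood of θ₀: (i) ∫ f(x;θ)g(x;θ)dμ(x) is a finite constant in θ; (ii) θ ↦ f(x;θ)g(x;θ) is differentiable for μ-a.e. x; (iii) |∂_θ(f(x;θ)g(x;θ))| ≤ h(x) for some μ-integrable h. Then the conditional law of X given X ∈ S equals the law g(·;θ₀)dμ. -/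
open MeasureTheory Filter Set ProbabilityTheory

/-!
For a Borel set `A`, write `c = ∫_A g(x;θ₀) dμ(x)`. The test function `f` is chosen so that
`f(x;θ) g(x;θ) = (θ - θ₀) (1_A(x) - c) g(x;θ₀)` for all `θ ∈ Θ`, which is possible because the
support of `g(·;θ)` does not depend on `θ`. Its `μ`-integral vanishes for each `θ ∈ Θ`, and its
`θ`-derivative is `(1_A(x) - c) g(x;θ₀)`, which is integrable and free of `θ`. The Stein operator
at `θ₀` is therefore `(1_A - c) 1_S`, and `E[𝒯_{θ₀}(f,g)(X)] = 0` reads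
`P(X ∈ A ∩ S) = c P(X ∈ S)`.
-/

/-- **Parametric Stein characterization, part (2)** (Theorem 2.1(2) of Ley–Swan).
Let `g` be a `θ`-parametric family of densities with respect to a σ-finite measure `μ`,
dominated near the interior point `θ₀` by an integrable function `H`, and whose support
`S` does not depend on `θ`. If a real random variable `X` (with `P(X ∈ S) > 0`) satisfies
`E[𝒯_{θ₀}(f,g)(X)] = 0` for every test function `f` fulfilling conditions (i)–(iii),
then the conditional law of `X` given `X ∈ S` equals `g(·;θ₀)dμ`. -/
theorem parametric_stein_characterization
    (μ : Measure ℝ) [SigmaFinite μ]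
    (Θ : Set ℝ) (θ₀ : ℝ) (hθ₀ : θ₀ ∈ interior Θ)
    (g : ℝ → ℝ → ℝ)
    (hg_meas : Measurable (Function.uncurry g))
    (hg_nonneg : ∀ x θ, 0 ≤ g x θ)
    (hg_density : ∀ θ ∈ Θ, ∫ x, g x θ ∂μ = 1)
    -- bounded neighborhood of θ₀ on which g is dominated by an integrable H
    (Θ₀ : Set ℝ) (hΘ₀ : Θ₀ ∈ nhds θ₀) (hΘ₀Θ : Θ₀ ⊆ Θ)
    (hΘ₀bdd : Bornology.IsBounded Θ₀)
    (H : ℝ → ℝ) (hH : Integrable H μ)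
    (hdom : ∀ x, ∀ θ ∈ Θ₀, g x θ ≤ H x)
    -- the support S does not depend on θ
    (S : Set ℝ) (hS : MeasurableSet S)
    (hsupp : ∀ θ ∈ Θ, {x | 0 < g x θ} = S)
    -- the random variable X
    {Ω : Type*} [MeasurableSpace Ω] (P : Measure Ω) [IsProbabilityMeasure P]
    (X : Ω → ℝ) (hX : Measurable X)
    (hXS : 0 < P (X ⁻¹' S))
    -- E[𝒯_{θ₀}(f,g)(X)] = 0 for every f satisfying (i)-(iii)
    (hstein : ∀ f : ℝ → ℝ → ℝ,
      (∃ U ∈ nhds θ₀, U ⊆ Θ ∧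
        -- (i) ∫ f(x;θ)g(x;θ)dμ(x) is a finite constant in θ
        (∃ c : ℝ, ∀ θ ∈ U, Integrable (fun x => f x θ * g x θ) μ ∧
          ∫ x, f x θ * g x θ ∂μ = c) ∧
        -- (ii) θ ↦ f(x;θ)g(x;θ) is differentiable for μ-a.e. x
        (∀ᵐ x ∂μ, ∀ θ ∈ U, DifferentiableAt ℝ (fun t => f x t * g x t) θ) ∧
        -- (iii) |∂_θ(f(x;θ)g(x;θ))| ≤ h(x) for some μ-integrable h
        (∃ h : ℝ → ℝ, Integrable h μ ∧
          ∀ x, ∀ θ ∈ U, |deriv (fun t => f x t * g x t) θ| ≤ h x)) →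
      ∫ ω, deriv (fun t => f (X ω) t * g (X ω) t) θ₀ / g (X ω) θ₀ ∂P = 0) :
    -- conclusion : the law of X conditionally on X ∈ S is g(·;θ₀)dμ
    Measure.map X (P[|X ⁻¹' S]) =
      μ.withDensity (fun x => ENNReal.ofReal (g x θ₀)) := by
  have hθ₀Θ : θ₀ ∈ Θ := interior_subset hθ₀
  have hmemS : ∀ θ ∈ Θ, ∀ x, x ∈ S ↔ 0 < g x θ := fun θ hθ x => by
    rw [← hsupp θ hθ]; rfl
  have hzero : ∀ θ ∈ Θ, ∀ x, x ∉ S → g x θ = 0 := fun θ hθ x hx =>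
    le_antisymm (not_lt.1 fun h => hx ((hmemS θ hθ x).2 h)) (hg_nonneg x θ)
  -- a nonzero Bochner integral forces integrability
  have hint : Integrable (fun x => g x θ₀) μ := by
    by_contra h
    have := hg_density θ₀ hθ₀Θ
    rw [integral_undef h] at this
    exact zero_ne_one this
  ext A hA
  set c : ℝ := ∫ x in A, g x θ₀ ∂μ with hc
  set k : ℝ → ℝ := fun x => (A.indicator 1 x - c) * g x θ₀ with hk
  have hk_eq : k = fun x => A.indicator (fun y => g y θ₀) x - c * g x θ₀ := by
    funext x
    by_cases hx : x ∈ A <;> simp [hk, hx, sub_mul]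
  have hk_int : Integrable k μ := by
    rw [hk_eq]
    exact (hint.indicator hA).sub (hint.const_mul c)
  have hk_zero : ∫ x, k x ∂μ = 0 := by
    rw [hk_eq, integral_sub (hint.indicator hA) (hint.const_mul c), integral_indicator hA,
      integral_const_mul, hg_density θ₀ hθ₀Θ, mul_one, ← hc, sub_self]
  -- the test function; off `S` it vanishes, both by `k = 0` and by division by zero
  let f : ℝ → ℝ → ℝ := fun x θ => (θ - θ₀) * k x / g x θ
  have hfg : ∀ x, ∀ θ ∈ Θ, f x θ * g x θ = (θ - θ₀) * k x := by
    intro x θ hθ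
    by_cases hx : x ∈ S
    · exact div_mul_cancel₀ _ ((hmemS θ hθ x).1 hx).ne'
    · simp [f, hk, hzero θ hθ x hx, hzero θ₀ hθ₀Θ x hx]
  have hderiv : ∀ x, ∀ θ ∈ interior Θ, HasDerivAt (fun t => f x t * g x t) (k x) θ := by
    intro x θ hθ
    have h1 : HasDerivAt (fun t => (t - θ₀) * k x) (k x) θ := by
      simpa using ((hasDerivAt_id θ).sub_const θ₀).mul_const (k x)
    refine h1.congr_of_eventuallyEq ?_
    filter_upwards [mem_interior_iff_mem_nhds.1 hθ] with t ht using hfg x t ht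
  have key := hstein f ⟨interior Θ, isOpen_interior.mem_nhds hθ₀, interior_subset,
    ⟨0, fun θ hθ => by
      simp only [hfg _ θ (interior_subset hθ)]
      exact ⟨hk_int.const_mul _, by rw [integral_const_mul, hk_zero, mul_zero]⟩⟩,
    Eventually.of_forall fun x θ hθ => (hderiv x θ hθ).differentiableAt,
    ⟨fun x => |k x|, hk_int.abs, fun x θ hθ => by rw [(hderiv x θ hθ).deriv]⟩⟩
  have hXSm : MeasurableSet (X ⁻¹' S) := hX hS
  have hXAm : MeasurableSet (X ⁻¹' A) := hX hA
  have hop : ∀ ω, deriv (fun t => f (X ω) t * g (X ω) t) θ₀ / g (X ω) θ₀ =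
      (X ⁻¹' S ∩ X ⁻¹' A).indicator 1 ω - c * (X ⁻¹' S).indicator 1 ω := by
    intro ω
    rw [(hderiv (X ω) θ₀ hθ₀).deriv]
    by_cases hx : X ω ∈ S
    · rw [mul_div_cancel_right₀ _ ((hmemS θ₀ hθ₀Θ _).1 hx).ne']
      by_cases hxA : X ω ∈ A <;> simp [hx, hxA]
    · simp [hx, hzero θ₀ hθ₀Θ _ hx]
  have hi : ∀ B : Set Ω, MeasurableSet B → Integrable (B.indicator (1 : Ω → ℝ)) P :=
    fun B hB => (integrable_const (1 : ℝ)).indicator hB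
  simp only [hop] at key
  rw [integral_sub (hi _ (hXSm.inter hXAm)) ((hi _ hXSm).const_mul c), integral_const_mul,
    integral_indicator_one (hXSm.inter hXAm), integral_indicator_one hXSm, sub_eq_zero] at key
  have hc0 : 0 ≤ c := integral_nonneg fun x => hg_nonneg x θ₀
  have key' : P (X ⁻¹' S ∩ X ⁻¹' A) = ENNReal.ofReal c * P (X ⁻¹' S) := by
    rw [← ofReal_measureReal, key, ENNReal.ofReal_mul hc0, ofReal_measureReal]
  rw [Measure.map_apply hX hA, cond_apply hXSm, key', withDensity_apply _ hA,
    ← ofReal_integral_eq_lintegral_ofReal hint.integrableOn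
      (Eventually.of_forall fun x => hg_nonneg x θ₀), ← hc, mul_comm, mul_assoc,
    ENNReal.mul_inv_cancel hXS.ne' (measure_ne_top _ _), mul_one]
end

section
/- Let g₀ : ℝ → [0,∞) be a Lebesgue probability density and μ₀ ∈ ℝ. Let f₀ : ℝ → ℝ be such that (i) ∫_ℝ f₀(x) g₀(x) dx is a finite constant; (ii) x ↦ f₀(x)g₀(x) is differentiable on ℝ; (iii) there exists an integrable function h with |(f₀ g₀)'(x−μ)| ≤ h(x) for all x ∈ ℝ and all μ in some bounded neighborhood of μ₀. If X is a random variable with Lebesgue density x ↦ g₀(x−μ₀), then E[𝒯_{μ₀;loc}(f₀,g₀)(X)] = 0, where 𝒯_{μ₀;loc}(f₀,g₀)(x) = −(f₀ g₀)'(x−μ₀) / g₀(x−μ₀), with the convention that the quotient is 0 where g₀(x−μ₀) = 0. -/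
/-!
Write `q = f₀ g₀`. Integrating against the density `g₀(· - μ₀)` cancels the denominator of the
Stein operator, except on the zero set of `g₀`. There `q` vanishes too, and a point where `q = 0`
and `q' ≠ 0` is isolated in the zero set of `q`, so such points are countable
(`ae_deriv_eq_zero_of_eq_zero`) and the cancellation holds almost everywhere. The expectation is
therefore `-∫ q'(x - μ₀) dx = -∫ q'`, which is zero because both `q` and `q'` are integrable on `ℝ`.
-/

open MeasureTheory Filter Set

/-- The points where `q` vanishes but its derivative does not are isolated zeros of `q`, hence form
a countable, and so Lebesgue-null, set. -/
theorem ae_deriv_eq_zero_of_eq_zero (q : ℝ → ℝ) :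
    ∀ᵐ x, q x = 0 → deriv q x = 0 := by
  have hc := countable_setOfPred_isolated_right_within (s := {x : ℝ | q x = 0})
  filter_upwards [hc.ae_notMem volume] with x hx hqx
  by_contra hd
  apply hx
  refine ⟨hqx, ?_⟩
  have hev : ∀ᶠ z in nhdsWithin x {x}ᶜ, q z ≠ 0 :=
    (differentiableAt_of_deriv_ne_zero hd).hasDerivAt.eventually_ne hd
  have hsub : {x : ℝ | q x = 0} ∩ Ioi x ⊆ {x}ᶜ := fun z hz => ne_of_gt hz.2
  rw [← Filter.eventually_false_iff_eq_bot]
  filter_upwards [nhdsWithin_mono x hsub hev, self_mem_nhdsWithin] with z hz hz'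
  exact hz hz'.1

/-- **Location-based Stein operator** (forward direction of Corollary 2.1 of Ley–Swan).
Let `g₀` be a Lebesgue probability density, `μ₀ ∈ ℝ`, and let `f₀` satisfy (i) `f₀ g₀`
is integrable, (ii) `x ↦ f₀(x)g₀(x)` is differentiable on `ℝ`, (iii) the derivative
`(f₀g₀)'(x−μ)` is dominated, uniformly over a bounded neighborhood of `μ₀`, by an
integrable function. If `X` has Lebesgue density `x ↦ g₀(x−μ₀)` then
`E[𝒯_{μ₀;loc}(f₀,g₀)(X)] = 0` where
`𝒯_{μ₀;loc}(f₀,g₀)(x) = −(f₀g₀)'(x−μ₀)/g₀(x−μ₀)` (zero where `g₀(x−μ₀) = 0`). -/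
theorem location_stein_operator_mean_zero
    (g₀ : ℝ → ℝ) (hg₀_nonneg : ∀ x, 0 ≤ g₀ x)
    (hg₀_density : ∫ x, g₀ x = 1)
    (μ₀ : ℝ) (f₀ : ℝ → ℝ)
    -- (i) ∫ f₀ g₀ is a finite constant
    (hi : Integrable (fun x => f₀ x * g₀ x))
    -- (ii) x ↦ f₀(x) g₀(x) is differentiable on ℝ
    (hii : Differentiable ℝ (fun x => f₀ x * g₀ x))
    -- (iii) uniform domination on a bounded neighborhood of μ₀
    (hiii : ∃ U ∈ nhds μ₀, Bornology.IsBounded U ∧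
      ∃ h : ℝ → ℝ, Integrable h ∧
        ∀ x : ℝ, ∀ μ ∈ U, |deriv (fun y => f₀ y * g₀ y) (x - μ)| ≤ h x) :
    ∫ x, -(deriv (fun y => f₀ y * g₀ y) (x - μ₀)) / g₀ (x - μ₀)
      ∂(volume.withDensity fun x => ENNReal.ofReal (g₀ (x - μ₀))) = 0 := by
  obtain ⟨U, hU, -, h, hh, hbound⟩ := hiii
  set q : ℝ → ℝ := fun y => f₀ y * g₀ y with hq
  -- The Bochner integral of a non-integrable function is `0`, so total mass `1` forces integrability.
  have hg : Integrable g₀ := by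
    by_contra hn
    simp [integral_undef hn] at hg₀_density
  have hshift : Integrable (fun x => deriv q (x - μ₀)) :=
    hh.mono' ((measurable_deriv q).comp (measurable_id.sub_const μ₀)).aestronglyMeasurable
      (Eventually.of_forall fun x => hbound x μ₀ (mem_of_mem_nhds hU))
  have hderiv : Integrable (deriv q) := by
    simpa using hshift.comp_add_right μ₀
  have hzero : ∫ x, deriv q x = 0 :=
    integral_eq_zero_of_hasDerivAt_of_integrable (fun x => (hii x).hasDerivAt) hderiv hi
  have hae : ∀ᵐ x, q (x - μ₀) = 0 → deriv q (x - μ₀) = 0 :=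
    (measurePreserving_sub_right volume μ₀).quasiMeasurePreserving.ae
      (ae_deriv_eq_zero_of_eq_zero q)
  rw [integral_withDensity_eq_integral_toReal_smul₀
    (hg.comp_sub_right μ₀).aestronglyMeasurable.aemeasurable.ennreal_ofReal
    (Eventually.of_forall fun _ => ENNReal.ofReal_lt_top)]
  calc _ = ∫ x, -deriv q (x - μ₀) := by
        refine integral_congr_ae ?_
        filter_upwards [hae] with x hx
        rw [ENNReal.toReal_ofReal (hg₀_nonneg _), smul_eq_mul]
        by_cases h0 : g₀ (x - μ₀) = 0
        · simp [h0, hx (by simp [hq, h0])]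
        · field_simp
    _ = 0 := by
        rw [integral_neg, integral_sub_right_eq_self (deriv q) μ₀, hzero, neg_zero]
end

section
/- For δ ∈ ℝ define S_δ(x) = sinh(arcsinh(x) + δ) and C_δ(x) = cosh(arcsinh(x) + δ). Let f₀ and g₀ be differentiable functions ℝ → ℝ. Then for every x ∈ ℝ and every δ ∈ ℝ, the following exchange-of-derivatives identity holds: ∂_x ( C_δ(x) · f₀(S_δ(x)) · g₀(S_δ(x)) ) = ∂_δ ( f₀(S_δ(x)) · (C_δ(x)/√(1+x²)) · g₀(S_δ(x)) ). -/
open Real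

/-- The sinh-arcsinh (SAS) skewing transformation of Jones and Pewsey:
`S_δ(x) = sinh(arcsinh(x) + δ)`. -/
noncomputable def sasS (δ x : ℝ) : ℝ := Real.sinh (Real.arsinh x + δ)

/-- The associated factor `C_δ(x) = cosh(arcsinh(x) + δ)`. -/
noncomputable def sasC (δ x : ℝ) : ℝ := Real.cosh (Real.arsinh x + δ)

/-- **Exchange of derivatives identity for the SAS skewing mechanism**
(equation (2.8) of Ley–Swan). For differentiable `f₀, g₀ : ℝ → ℝ` and all `x, δ ∈ ℝ`,
`∂_x (C_δ(x) f₀(S_δ(x)) g₀(S_δ(x))) = ∂_δ (f₀(S_δ(x)) (C_δ(x)/√(1+x²)) g₀(S_δ(x)))`. -/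
theorem sas_exchange_of_derivatives
    (f₀ g₀ : ℝ → ℝ) (hf₀ : Differentiable ℝ f₀) (hg₀ : Differentiable ℝ g₀)
    (δ x : ℝ) :
    deriv (fun y => sasC δ y * (f₀ (sasS δ y) * g₀ (sasS δ y))) x =
      deriv (fun d => f₀ (sasS d x) * (sasC d x / Real.sqrt (1 + x ^ 2) * g₀ (sasS d x)))
        δ := by
  -- Both sides are derivatives of `H u = cosh u * f₀ (sinh u) * g₀ (sinh u)` composed with
  -- `u = arsinh x + δ`, and `∂u/∂δ = 1` while `∂u/∂x = (√(1 + x ^ 2))⁻¹`.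
  let H : ℝ → ℝ := fun u => Real.cosh u * (f₀ (Real.sinh u) * g₀ (Real.sinh u))
  have hH : DifferentiableAt ℝ H (Real.arsinh x + δ) := by
    have hd : Differentiable ℝ H :=
      Real.differentiable_cosh.mul
        ((hf₀.comp Real.differentiable_sinh).mul (hg₀.comp Real.differentiable_sinh))
    exact hd _
  have hx : HasDerivAt (fun y => sasC δ y * (f₀ (sasS δ y) * g₀ (sasS δ y)))
      (deriv H (Real.arsinh x + δ) * (√(1 + x ^ 2))⁻¹) x := by
    have h := HasDerivAt.comp (h₂ := H) x hH.hasDerivAt ((Real.hasDerivAt_arsinh x).add_const δ)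
    exact h
  have hδ : HasDerivAt (fun d => H (Real.arsinh x + d) * (√(1 + x ^ 2))⁻¹)
      (deriv H (Real.arsinh x + δ) * (√(1 + x ^ 2))⁻¹) δ :=
    (hH.hasDerivAt.comp_const_add (Real.arsinh x) δ).mul_const _
  have hfun : (fun d => f₀ (sasS d x) * (sasC d x / Real.sqrt (1 + x ^ 2) * g₀ (sasS d x))) =
      fun d => H (Real.arsinh x + d) * (√(1 + x ^ 2))⁻¹ := by
    funext d
    simp only [H, sasS, sasC]
    ring
  rw [hx.deriv, hfun, hδ.deriv]
end

section
/- Let X be a standard Gaussian random variable, with density φ(x) = (2π)^{-1/2} e^{-x²/2}. Let f₁ : ℝ → ℝ be differentiable such that x ↦ (1+x²) f₁(x) φ(x) tends to 0 as x → ±∞ and such that (1+x²)f₁'(x)φ(x), x f₁(x) φ(x) and (x³−x) f₁(x) φ(x) are Lebesgue integrable on ℝ. Then E[(1+X²) f₁'(X) − (X³ − X) f₁(X)] = 0. -/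
/-!
Since `φ' = -x φ`, the integrand is the derivative of `(1 + x²) f₁ φ`, a function that tends to `0`
at `±∞`. The integrand is integrable, so the fundamental theorem of calculus on the whole line
(`integral_of_hasDerivAt_of_tendsto`) gives `0 - 0`.
-/

open MeasureTheory Filter Real

/-- The standard Gaussian density `φ(x) = (2π)^{-1/2} e^{-x²/2}`. -/
noncomputable def gaussPdf (x : ℝ) : ℝ :=
  (Real.sqrt (2 * Real.pi))⁻¹ * Real.exp (-x ^ 2 / 2)

/-- **A new Stein-type operator for the standard Gaussian** (Ley–Swan, from the
SAS-skewness-based Stein operator with `g₀ = φ`, `δ₀ = 0`, `f₀(x) = √(1+x²) f₁(x)`).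
If `X` is standard Gaussian and `f₁` is differentiable with `(1+x²)f₁(x)φ(x) → 0`
at `±∞` and suitable integrability, then
`E[(1+X²) f₁'(X) − (X³ − X) f₁(X)] = 0`. -/
theorem gaussian_sas_stein_operator_mean_zero
    (f₁ : ℝ → ℝ) (hf₁ : Differentiable ℝ f₁)
    (hlim_top : Tendsto (fun x => (1 + x ^ 2) * f₁ x * gaussPdf x) atTop (nhds 0))
    (hlim_bot : Tendsto (fun x => (1 + x ^ 2) * f₁ x * gaussPdf x) atBot (nhds 0))
    (hint1 : Integrable (fun x => (1 + x ^ 2) * deriv f₁ x * gaussPdf x))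
    (hint2 : Integrable (fun x => x * f₁ x * gaussPdf x))
    (hint3 : Integrable (fun x => (x ^ 3 - x) * f₁ x * gaussPdf x)) :
    ∫ x, ((1 + x ^ 2) * deriv f₁ x - (x ^ 3 - x) * f₁ x) * gaussPdf x = 0 := by
  have hφ : ∀ x, HasDerivAt gaussPdf (-x * gaussPdf x) x := fun x => by
    have h : HasDerivAt (fun y : ℝ => -y ^ 2 / 2) (-x) x := by
      refine ((hasDerivAt_pow 2 x).neg.div_const 2).congr_deriv ?_
      push_cast
      ring
    refine (h.exp.const_mul (Real.sqrt (2 * Real.pi))⁻¹).congr_deriv ?_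
    unfold gaussPdf
    ring
  -- The terms in `f₁` combine through `2x - x (1 + x²) = -(x³ - x)`.
  have hderiv : ∀ x, HasDerivAt (fun x => (1 + x ^ 2) * f₁ x * gaussPdf x)
      (((1 + x ^ 2) * deriv f₁ x - (x ^ 3 - x) * f₁ x) * gaussPdf x) x := fun x => by
    refine ((((hasDerivAt_pow 2 x).const_add 1).mul (hf₁ x).hasDerivAt).mul (hφ x)).congr_deriv ?_
    simp only [Pi.mul_apply]
    push_cast
    ring
  have hint : Integrable
      (fun x => ((1 + x ^ 2) * deriv f₁ x - (x ^ 3 - x) * f₁ x) * gaussPdf x) := by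
    simpa only [sub_mul, Pi.sub_def] using hint1.sub hint3
  simpa using integral_of_hasDerivAt_of_tendsto hderiv hint hlim_bot hlim_top
end

section
/- Let (H_n)_{n≥0} be the probabilists' Hermite polynomials, defined recursively by H₀(x) = 1 and H_{n+1}(x) = x H_n(x) − H_n'(x). Let X be a standard Gaussian random variable with density φ(x) = (2π)^{-1/2} e^{-x²/2}. Let n ≥ 0 and let f₀ : ℝ → ℝ be differentiable such that x ↦ H_n(x) f₀(x) φ(x) tends to 0 as x → ±∞ and such that H_n(x)f₀'(x)φ(x) and H_{n+1}(x)f₀(x)φ(x) are Lebesgue integrable on ℝ. Then E[ −H_n(X) f₀'(X) + H_{n+1}(X) f₀(X) ] = 0. -/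
/-!
Since `φ' = -x φ` and `H_{n+1} = x H_n - H_n'`, the product rule gives
`(H_n f₀ φ)' = H_n f₀' φ - H_{n+1} f₀ φ`. The integrand is therefore the derivative of
`-H_n f₀ φ`, which vanishes at `±∞`, so the fundamental theorem of calculus on `ℝ` gives
integral zero. The recursion is stated with `deriv`, so the product rule also needs each `H_n`
to be differentiable; this holds because `H_n` is a polynomial function.
-/

open MeasureTheory Filter Real

theorem hasDerivAt_gaussPdf (x : ℝ) : HasDerivAt gaussPdf (-x * gaussPdf x) x := by
  have h : HasDerivAt (fun y : ℝ => -y ^ 2 / 2) (-x) x := by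
    refine ((hasDerivAt_pow 2 x).neg.div_const 2).congr_deriv ?_
    push_cast
    ring
  have h' := (h.exp).const_mul (Real.sqrt (2 * Real.pi))⁻¹
  refine h'.congr_deriv ?_
  unfold gaussPdf
  ring

/-- Differentiability alone does not pass through the recursion, which involves the derivative;
being a polynomial function does. -/
theorem exists_polynomial_of_hermite_rec (H : ℕ → ℝ → ℝ) (hH0 : ∀ x, H 0 x = 1)
    (hHrec : ∀ n x, H (n + 1) x = x * H n x - deriv (H n) x) (n : ℕ) :
    ∃ p : Polynomial ℝ, H n = fun x => p.eval x := by
  induction n with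
  | zero => exact ⟨1, by funext x; simp [hH0]⟩
  | succ k ih =>
    obtain ⟨p, hp⟩ := ih
    refine ⟨Polynomial.X * p - Polynomial.derivative p, ?_⟩
    funext x
    rw [hHrec, hp]
    simp

/-- **The Goldstein–Reinert family of Gaussian Stein operators** (equation (2.7) of
Ley–Swan). Let `(H_n)` be the probabilists' Hermite polynomials, defined by `H₀(x) = 1`
and `H_{n+1}(x) = x H_n(x) − H_n'(x)`. If `X` is standard Gaussian and `f₀` is
differentiable with `H_n(x) f₀(x) φ(x) → 0` at `±∞` and suitable integrability, then
`E[−H_n(X) f₀'(X) + H_{n+1}(X) f₀(X)] = 0`. -/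
theorem gaussian_hermite_stein_operator_mean_zero
    (H : ℕ → ℝ → ℝ)
    (hH0 : ∀ x, H 0 x = 1)
    (hHrec : ∀ n x, H (n + 1) x = x * H n x - deriv (H n) x)
    (n : ℕ) (f₀ : ℝ → ℝ) (hf₀ : Differentiable ℝ f₀)
    (hlim_top : Tendsto (fun x => H n x * f₀ x * gaussPdf x) atTop (nhds 0))
    (hlim_bot : Tendsto (fun x => H n x * f₀ x * gaussPdf x) atBot (nhds 0))
    (hint1 : Integrable (fun x => H n x * deriv f₀ x * gaussPdf x))
    (hint2 : Integrable (fun x => H (n + 1) x * f₀ x * gaussPdf x)) :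
    ∫ x, (-(H n x) * deriv f₀ x + H (n + 1) x * f₀ x) * gaussPdf x = 0 := by
  obtain ⟨p, hp⟩ := exists_polynomial_of_hermite_rec H hH0 hHrec n
  have hdiff : Differentiable ℝ (H n) := by
    rw [hp]
    exact p.differentiable
  have hderiv : ∀ x, HasDerivAt (fun x => -(H n x * f₀ x * gaussPdf x))
      ((-(H n x) * deriv f₀ x + H (n + 1) x * f₀ x) * gaussPdf x) x := by
    intro x
    refine (((hdiff x).hasDerivAt.mul (hf₀ x).hasDerivAt).mul
      (hasDerivAt_gaussPdf x)).neg.congr_deriv ?_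
    rw [hHrec, Pi.mul_apply]
    ring
  have hint : Integrable
      (fun x => (-(H n x) * deriv f₀ x + H (n + 1) x * f₀ x) * gaussPdf x) := by
    refine (hint2.sub hint1).congr (Eventually.of_forall fun x => ?_)
    simp only [Pi.sub_apply]
    ring
  rw [integral_of_hasDerivAt_of_tendsto hderiv hint hlim_bot.neg hlim_top.neg, sub_self]
end

section
/- Let g : ℝ × Θ → [0,∞) be a θ-parametric family of Lebesgue probability densities whose support for each θ is an interval with closure [a,b] (−∞ ≤ a < b ≤ ∞), and fix an interior point θ₀ ∈ Θ. Let f : ℝ × Θ → ℝ satisfy, for all θ in a neighborhood of θ₀: f(·;θ) ≥ 0 and ∫ f(x;θ) g(x;θ) dx = 1, so that g*(x;θ) = f(x;θ)g(x;θ) is again a probability density; let f̃ be a function satisfying the exchange relation ∂_θ(f(x;θ)g(x;θ)) = ∂_x(f̃(x;θ)g(x;θ)) for all x and all θ near θ₀, together with the boundary conditions f̃(a;θ)g(a;θ) = f̃(b;θ)g(b;θ) = 0. Let X have density g(·;θ₀) and X* have density g*(·;θ₀), let φ(x) = ∂_θ(log g*(x;θ))|_{θ=θ₀} be the score of X*,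 and let I = E[φ(X*)²] ∈ (0,∞) be its Fisher information. Then for every continuously differentiable h : ℝ → ℝ with E[h(X*)²] < ∞ and E[|h'(X) f̃(X;θ₀)|] < ∞: Var[h(X*)] ≥ ( E[ h'(X) f̃(X;θ₀) ] )² / I. -/
/-!
Write `p = f g` and `q = f̃ g` at `θ₀`, so that `q' = D` is the `θ`-derivative of `p`.

Where `p` vanishes it is minimal in `θ`, hence `D = 0` there, and `D = φ p` holds everywhere.
By AM-GM, `D` and `h D` are dominated by combinations of the integrable functions `p`, `φ² p`
and `h² p`.

The heart of the proof is the integration by parts `∫ h D = -∫ h' q`, for which the boundary term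
`h q` must vanish at `±∞` although only `q → 0` is known. As `(h q)' = h' q + h D` is integrable,
`h q` has a limit `L`; if `L ≠ 0`, then `q'/q = h D / (h q)` would be integrable near infinity, so
`log |q|` would converge, contradicting `q → 0` (`tendsto_mul_zero_atTop`).

The bound is then the Cauchy-Schwarz inequality for `h - E h` and the score `φ` in `L²(p)`, in the
form `∫ ((h - m) + t φ)² p ≥ 0` at the optimal `t`.
-/

open MeasureTheory Filter Set

/-- A boundary term `h q` with `q → 0` vanishes at infinity as soon as both summands of its
derivative are integrable; no growth bound on `h` is needed. -/
lemma tendsto_mul_zero_atTop {h h' q D : ℝ → ℝ}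
    (hh : ∀ x, HasDerivAt h (h' x) x) (hq : ∀ x, HasDerivAt q (D x) x)
    (h1 : Integrable (fun x => h' x * q x)) (h2 : Integrable (fun x => h x * D x))
    (hlim : Tendsto q atTop (nhds 0)) :
    Tendsto (fun x => h x * q x) atTop (nhds 0) := by
  have hder : ∀ x, HasDerivAt (fun x => h x * q x) (h' x * q x + h x * D x) x :=
    fun x => (hh x).mul (hq x)
  have hL := tendsto_limUnder_of_hasDerivAt_of_integrableOn_Ioi (a := 0)
    (fun x _ => hder x) (h1.add h2).integrableOn
  set L := limUnder atTop (fun x => h x * q x)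
  by_cases hL0 : L = 0
  · rwa [hL0] at hL
  exfalso
  have hLpos : 0 < |L| := abs_pos.mpr hL0
  have hev : ∀ᶠ x in atTop, |L| / 2 < |h x * q x| :=
    hL.abs.eventually (lt_mem_nhds (by linarith))
  obtain ⟨N, hN⟩ := eventually_atTop.mp hev
  have hq0 : ∀ x, N ≤ x → q x ≠ 0 := by
    intro x hx h0
    have := hN x hx
    rw [h0, mul_zero, abs_zero] at this
    linarith
  have hlog : ∀ x ∈ Ioi N, HasDerivAt (fun x => Real.log (q x)) (D x / q x) x :=
    fun x hx => (hq x).log (hq0 x (le_of_lt hx))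
  have hDm : Measurable D := by
    have : D = deriv q := funext fun x => (hq x).deriv.symm
    rw [this]
    exact measurable_deriv q
  have hqm : Measurable q :=
    (continuous_iff_continuousAt.mpr fun x => (hq x).continuousAt).measurable
  have hint : IntegrableOn (fun x => D x / q x) (Ioi N) := by
    refine Integrable.mono' ((h2.norm.const_mul (2 / |L|)).integrableOn)
      (hDm.div hqm).aestronglyMeasurable ?_
    refine (ae_restrict_iff' measurableSet_Ioi).mpr (Eventually.of_forall fun x hx => ?_)
    have hx' : N ≤ x := le_of_lt hx
    have h3 := hN x hx'
    have h4 : 0 < |q x| := abs_pos.mpr (hq0 x hx')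
    rw [Real.norm_eq_abs, Real.norm_eq_abs, abs_div, abs_mul, div_le_iff₀ h4]
    rw [abs_mul] at h3
    have h5 : 2 / |L| * (|h x| * |D x|) * |q x| = (2 / |L|) * (|h x| * |q x|) * |D x| := by ring
    rw [h5]
    have h6 : 1 ≤ (2 / |L|) * (|h x| * |q x|) := by
      rw [div_mul_eq_mul_div, le_div_iff₀ hLpos]
      linarith
    nlinarith [abs_nonneg (D x)]
  have hconv := tendsto_limUnder_of_hasDerivAt_of_integrableOn_Ioi hlog hint
  have hbot : Tendsto (fun x => Real.log (q x)) atTop atBot := by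
    refine Real.tendsto_log_nhdsNE_zero.comp (tendsto_nhdsWithin_iff.mpr ⟨hlim, ?_⟩)
    exact eventually_atTop.mpr ⟨N, fun x hx => hq0 x hx⟩
  exact not_tendsto_nhds_of_tendsto_atBot hbot _ hconv

lemma tendsto_mul_zero_atBot {h h' q D : ℝ → ℝ}
    (hh : ∀ x, HasDerivAt h (h' x) x) (hq : ∀ x, HasDerivAt q (D x) x)
    (h1 : Integrable (fun x => h' x * q x)) (h2 : Integrable (fun x => h x * D x))
    (hlim : Tendsto q atBot (nhds 0)) :
    Tendsto (fun x => h x * q x) atBot (nhds 0) := by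
  have key := tendsto_mul_zero_atTop (h := fun x => h (-x)) (h' := fun x => -h' (-x))
    (q := fun x => q (-x)) (D := fun x => -D (-x))
    (fun x => by simpa [Function.comp_def] using (hh (-x)).comp x (hasDerivAt_neg x))
    (fun x => by simpa [Function.comp_def] using (hq (-x)).comp x (hasDerivAt_neg x))
    (by simpa using h1.comp_neg.neg) (by simpa using h2.comp_neg.neg)
    (hlim.comp tendsto_neg_atTop_atBot)
  simpa [Function.comp_def] using key.comp tendsto_neg_atBot_atTop

lemma integral_mul_eq_neg {h h' q D : ℝ → ℝ}
    (hh : ∀ x, HasDerivAt h (h' x) x) (hq : ∀ x, HasDerivAt q (D x) x)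
    (h1 : Integrable (fun x => h' x * q x)) (h2 : Integrable (fun x => h x * D x))
    (hbot : Tendsto q atBot (nhds 0)) (htop : Tendsto q atTop (nhds 0)) :
    ∫ x, h x * D x = -∫ x, h' x * q x := by
  have := integral_of_hasDerivAt_of_tendsto (fun x => (hh x).mul (hq x)) (h1.add h2)
    (tendsto_mul_zero_atBot hh hq h1 h2 hbot) (tendsto_mul_zero_atTop hh hq h1 h2 htop)
  have h3 := integral_add h1 h2
  linarith

/-- The boundary condition at the right end `b` of the support gives `q → 0` at `+∞`: for finite `b`
because `q` vanishes beyond `b`. -/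
lemma tendsto_atTop_of_boundary {q : ℝ → ℝ} {b : EReal} (hb : b ≠ ⊥)
    (h0 : ∀ x : ℝ, b < x → q x = 0)
    (hlim : Tendsto q (comap (fun x : ℝ => (x : EReal)) (nhdsWithin b (Iio b))) (nhds 0)) :
    Tendsto q atTop (nhds 0) := by
  induction b with
  | bot => exact absurd rfl hb
  | top =>
    refine hlim.mono_left (tendsto_iff_comap.mp ?_)
    exact tendsto_nhdsWithin_iff.mpr
      ⟨EReal.tendsto_coe_atTop, Eventually.of_forall fun x => EReal.coe_lt_top x⟩
  | coe b =>
    refine tendsto_const_nhds.congr' ?_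
    filter_upwards [eventually_gt_atTop b] with x hx
    exact (h0 x (EReal.coe_lt_coe_iff.mpr hx)).symm

lemma tendsto_atBot_of_boundary {q : ℝ → ℝ} {a : EReal} (ha : a ≠ ⊤)
    (h0 : ∀ x : ℝ, (x : EReal) < a → q x = 0)
    (hlim : Tendsto q (comap (fun x : ℝ => (x : EReal)) (nhdsWithin a (Ioi a))) (nhds 0)) :
    Tendsto q atBot (nhds 0) := by
  induction a with
  | top => exact absurd rfl ha
  | bot =>
    refine hlim.mono_left (tendsto_iff_comap.mp ?_)
    exact tendsto_nhdsWithin_iff.mpr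
      ⟨EReal.tendsto_coe_atBot, Eventually.of_forall fun x => EReal.bot_lt_coe x⟩
  | coe a =>
    refine tendsto_const_nhds.congr' ?_
    filter_upwards [eventually_lt_atBot a] with x hx
    exact (h0 x (EReal.coe_lt_coe_iff.mpr hx)).symm

/-- **Generalized Cramér–Rao lower variance bound** (lower bound (3.3) of Theorem 3.1
of Ley–Swan). Let `g(·;θ)` be a parametric family of Lebesgue probability densities
whose support is an interval with closure `[a,b]`, `θ₀` an interior point of `Θ`.
Let `f(·;θ) ≥ 0` be a normalized test function and `f̃` an exchanging function, i.e.
`∂_θ(f(x;θ)g(x;θ)) = ∂_x(f̃(x;θ)g(x;θ)) = D(x;θ)`, with the boundary conditions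
`f̃(a;θ)g(a;θ) = f̃(b;θ)g(b;θ) = 0`. Let `X ∼ g(·;θ₀)`, `X* ∼ g* = f(·;θ₀)g(·;θ₀)`,
`φ` the score of `X*` and `I = E[φ(X*)²] ∈ (0,∞)` its Fisher information. Then for
every `C¹` function `h` with `E[h(X*)²] < ∞` and `E[|h'(X)f̃(X;θ₀)|] < ∞`,
`Var[h(X*)] ≥ (E[h'(X) f̃(X;θ₀)])² / I`. -/
theorem generalized_cramer_rao_lower_bound
    (Θ : Set ℝ) (θ₀ : ℝ) (hθ₀ : θ₀ ∈ interior Θ)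
    (g f ftil : ℝ → ℝ → ℝ) (D : ℝ → ℝ → ℝ)
    (a b : EReal) (hab : a < b)
    (hg_nonneg : ∀ x θ, 0 ≤ g x θ)
    (hU : ∃ U ∈ nhds θ₀, U ⊆ Θ ∧ ∀ θ ∈ U,
      -- g(·;θ) is a probability density
      (∫ x, g x θ = 1) ∧
      -- whose support is an interval with closure [a,b]
      ({x : ℝ | (x : EReal) ∈ Set.Ioo a b} ⊆ {x | 0 < g x θ} ∧
        {x | 0 < g x θ} ⊆ {x : ℝ | (x : EReal) ∈ Set.Icc a b}) ∧
      -- f(·;θ) ≥ 0 and ∫ f(x;θ)g(x;θ)dx = 1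
      (∀ x, 0 ≤ f x θ) ∧ (∫ x, f x θ * g x θ = 1) ∧
      -- the exchange relation ∂_θ(f g) = ∂_x(f̃ g) (= D)
      (∀ x, HasDerivAt (fun t => f x t * g x t) (D x θ) θ ∧
        HasDerivAt (fun y => ftil y θ * g y θ) (D x θ) x) ∧
      -- boundary conditions f̃(a;θ)g(a;θ) = f̃(b;θ)g(b;θ) = 0
      Tendsto (fun x : ℝ => ftil x θ * g x θ)
        (Filter.comap (fun x : ℝ => (x : EReal)) (nhdsWithin a (Set.Ioi a))) (nhds 0) ∧
      Tendsto (fun x : ℝ => ftil x θ * g x θ)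
        (Filter.comap (fun x : ℝ => (x : EReal)) (nhdsWithin b (Set.Iio b))) (nhds 0))
    -- the score function of X* and its Fisher information I ∈ (0,∞)
    (φ : ℝ → ℝ) (hφ : ∀ x, φ x = D x θ₀ / (f x θ₀ * g x θ₀))
    (I : ℝ) (hI : I = ∫ x, φ x ^ 2 * (f x θ₀ * g x θ₀))
    (hIfin : Integrable (fun x => φ x ^ 2 * (f x θ₀ * g x θ₀)))
    (hIpos : 0 < I)
    -- the test function h
    (h : ℝ → ℝ) (hh : ContDiff ℝ 1 h)
    (hh_meanint : Integrable (fun x => h x * (f x θ₀ * g x θ₀)))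
    (hh2 : Integrable (fun x => h x ^ 2 * (f x θ₀ * g x θ₀)))
    (hh1 : Integrable (fun x => deriv h x * (ftil x θ₀ * g x θ₀))) :
    (∫ x, deriv h x * (ftil x θ₀ * g x θ₀)) ^ 2 / I ≤
      ∫ x, (h x - ∫ y, h y * (f y θ₀ * g y θ₀)) ^ 2 * (f x θ₀ * g x θ₀) := by
  obtain ⟨U, hUn, -, hU⟩ := hU
  obtain ⟨-, ⟨-, hsupp⟩, hf0, hp1, hD, hlima, hlimb⟩ := hU θ₀ (mem_of_mem_nhds hUn)
  have hpos : ∀ x, ∀ θ ∈ U, 0 ≤ f x θ * g x θ := fun x θ hθ =>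
    mul_nonneg ((hU θ hθ).2.2.1 x) (hg_nonneg x θ)
  have hp0 : ∀ x, 0 ≤ f x θ₀ * g x θ₀ := fun x => hpos x θ₀ (mem_of_mem_nhds hUn)
  have hg0 : ∀ x : ℝ, (x : EReal) ∉ Icc a b → ftil x θ₀ * g x θ₀ = 0 := by
    intro x hx
    have : g x θ₀ = 0 :=
      le_antisymm (not_lt.mp fun hlt => hx (hsupp hlt)) (hg_nonneg x θ₀)
    rw [this, mul_zero]
  have hqtop : Tendsto (fun x => ftil x θ₀ * g x θ₀) atTop (nhds 0) :=
    tendsto_atTop_of_boundary (ne_bot_of_gt hab)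
      (fun x hx => hg0 x fun hm => absurd hm.2 (not_le.mpr hx)) hlimb
  have hqbot : Tendsto (fun x => ftil x θ₀ * g x θ₀) atBot (nhds 0) :=
    tendsto_atBot_of_boundary (ne_top_of_lt hab)
      (fun x hx => hg0 x fun hm => absurd hm.1 (not_le.mpr hx)) hlima
  have hφD : ∀ x, φ x * (f x θ₀ * g x θ₀) = D x θ₀ := by
    intro x
    by_cases hz : f x θ₀ * g x θ₀ = 0
    · -- a zero of the nonnegative function `θ ↦ f x θ * g x θ` is a minimum
      have hmin : IsLocalMin (fun t => f x t * g x t) θ₀ := by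
        filter_upwards [hUn] with t ht
        rw [hz]
        exact hpos x t ht
      rw [hz, mul_zero, hmin.hasDerivAt_eq_zero (hD x).1]
    · rw [hφ, div_mul_cancel₀ _ hz]
  have hq : ∀ x, HasDerivAt (fun y => ftil y θ₀ * g y θ₀) (D x θ₀) x := fun x => (hD x).2
  have hDm : Measurable (fun x => D x θ₀) := by
    have : (fun x => D x θ₀) = deriv (fun y => ftil y θ₀ * g y θ₀) :=
      funext fun x => (hq x).deriv.symm
    rw [this]
    exact measurable_deriv _
  have hpint : Integrable (fun x => f x θ₀ * g x θ₀) :=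
    Integrable.of_integral_ne_zero (by rw [hp1]; exact one_ne_zero)
  -- AM-GM: `|u φ| p ≤ u² p + φ² p`
  have hamgm : ∀ u : ℝ → ℝ, Measurable u → Integrable (fun x => u x ^ 2 * (f x θ₀ * g x θ₀)) →
      Integrable (fun x => u x * D x θ₀) := by
    intro u hu hu2
    refine (hu2.add hIfin).mono' (hu.mul hDm).aestronglyMeasurable
      (Eventually.of_forall fun x => ?_)
    rw [← hφD x, ← mul_assoc, Real.norm_eq_abs, abs_mul, abs_of_nonneg (hp0 x), Pi.add_apply,
      ← add_mul]
    refine mul_le_mul_of_nonneg_right ?_ (hp0 x)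
    rw [abs_le]
    constructor <;> nlinarith [sq_nonneg (u x + φ x), sq_nonneg (u x - φ x),
      sq_nonneg (u x), sq_nonneg (φ x)]
  have hDint : Integrable (fun x => D x θ₀) := by
    simpa using hamgm (fun _ => 1) measurable_const (by simpa using hpint)
  have hhD : Integrable (fun x => h x * D x θ₀) := hamgm h hh.continuous.measurable hh2
  have hD0 : ∫ x, D x θ₀ = 0 := by
    simpa using integral_of_hasDerivAt_of_tendsto hq hDint hqbot hqtop
  have hibp : ∫ x, h x * D x θ₀ = -∫ x, deriv h x * (ftil x θ₀ * g x θ₀) :=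
    integral_mul_eq_neg (fun x => (hh.differentiable one_ne_zero x).hasDerivAt) hq hh1 hhD
      hqbot hqtop
  set c := ∫ x, deriv h x * (ftil x θ₀ * g x θ₀)
  set m := ∫ y, h y * (f y θ₀ * g y θ₀)
  have hV : Integrable (fun x => (h x - m) ^ 2 * (f x θ₀ * g x θ₀)) := by
    refine ((hh2.sub (hh_meanint.const_mul (2 * m))).add (hpint.const_mul (m ^ 2))).congr
      (Eventually.of_forall fun x => ?_)
    simp only [Pi.add_apply, Pi.sub_apply]
    ring
  have hcross : Integrable (fun x => h x * D x θ₀ - m * D x θ₀) := hhD.sub (hDint.const_mul m)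
  have hcrossval : ∫ x, (h x * D x θ₀ - m * D x θ₀) = -c := by
    rw [integral_sub hhD (hDint.const_mul m), integral_const_mul, hD0, hibp]
    ring
  -- the quadratic `t ↦ ∫ ((h - m) + t φ)² p` is minimal at `t = c / I`
  have hquad : 0 ≤ ∫ x, ((h x - m) ^ 2 * (f x θ₀ * g x θ₀)
      + 2 * (c / I) * (h x * D x θ₀ - m * D x θ₀)
      + (c / I) ^ 2 * (φ x ^ 2 * (f x θ₀ * g x θ₀))) := by
    refine integral_nonneg fun x => ?_
    have : 0 ≤ ((h x - m) + c / I * φ x) ^ 2 * (f x θ₀ * g x θ₀) :=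
      mul_nonneg (sq_nonneg _) (hp0 x)
    simp only [Pi.zero_apply]
    rw [← hφD x]
    linarith
  rw [integral_add (by exact hV.add (hcross.const_mul _)) (hIfin.const_mul _),
    integral_add hV (hcross.const_mul _), integral_const_mul, integral_const_mul, hcrossval,
    ← hI] at hquad
  have hsimp : 2 * (c / I) * -c + (c / I) ^ 2 * I = -(c ^ 2 / I) := by
    field_simp
    ring
  linarith
end

section
/- Let X be a standard Gaussian random variable. Then for every continuously differentiable h : ℝ → ℝ with E[h(X)²] < ∞ and E[|X h'(X)|] < ∞: (1/2)(E[X h'(X)])² ≤ Var[h(X)], with equality if and only if h(x) is proportional (up to additive constant) to 1 − x². -/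
/-!
Write `s x = x ^ 2 - 1`. Integration by parts against `(x φ)' = -s φ` gives
`E[X g'(X)] = E[g(X) s(X)]`; with `g = 1` and `g = s` this yields `E[s] = 0` and
`E[s ^ 2] = 2`, and with `g = h` it identifies `A = E[X h'(X)]` as the inner product of `h` and `s`.
Hence, for `m = E[h(X)]`, the squared distance from `h - m` to the line spanned by `s` is
`E[(h - m - (A / 2) s) ^ 2] = Var[h(X)] - A ^ 2 / 2`. It is nonnegative, and vanishes exactly when
`h = m + (A / 2) s` almost everywhere.
-/

open MeasureTheory Filter

lemma gaussPdf_eq : gaussPdf = ProbabilityTheory.gaussianPDFReal 0 1 := by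
  funext x
  simp [gaussPdf, ProbabilityTheory.gaussianPDFReal]

lemma gaussPdf_pos (x : ℝ) : 0 < gaussPdf x := by
  unfold gaussPdf
  positivity

lemma continuous_gaussPdf : Continuous gaussPdf := by
  unfold gaussPdf
  fun_prop

lemma hasDerivAt_id_mul_gaussPdf (x : ℝ) :
    HasDerivAt (fun y => y * gaussPdf y) ((1 - x ^ 2) * gaussPdf x) x := by
  have h1 : HasDerivAt (fun y : ℝ => -y ^ 2 / 2) (-x) x := by
    exact (((hasDerivAt_pow 2 x).fun_neg).div_const 2).congr_deriv (by norm_num; ring)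
  have h2 : HasDerivAt gaussPdf (-x * gaussPdf x) x := by
    refine (h1.exp.const_mul (Real.sqrt (2 * Real.pi))⁻¹).congr_deriv ?_
    rw [gaussPdf]
    ring
  exact ((hasDerivAt_id' x).fun_mul h2).congr_deriv (by ring)

lemma integrable_pow_mul_gaussPdf (n : ℕ) : Integrable (fun x => x ^ n * gaussPdf x) := by
  have h1 := (integrable_rpow_mul_exp_neg_mul_sq (b := 1 / 2) (by norm_num) (s := n)
    (by have := n.cast_nonneg (α := ℝ); linarith)).const_mul (Real.sqrt (2 * Real.pi))⁻¹
  refine h1.congr (Eventually.of_forall fun x => ?_)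
  simp only [Real.rpow_natCast, gaussPdf]
  rw [show -x ^ 2 / 2 = -(1 / 2) * x ^ 2 by ring]
  ring

/-- A continuous function in `L²(φ)` times a monomial is in `L¹(φ)`,
because `|g x ^ n| ≤ g ^ 2 + x ^ (2 n)`. -/
lemma integrable_mul_pow_mul_gaussPdf {g : ℝ → ℝ} (hg : Continuous g)
    (hg2 : Integrable (fun x => g x ^ 2 * gaussPdf x)) (n : ℕ) :
    Integrable (fun x => g x * x ^ n * gaussPdf x) := by
  refine (hg2.add (integrable_pow_mul_gaussPdf (2 * n))).mono'
    ((hg.mul (continuous_pow n)).mul continuous_gaussPdf).aestronglyMeasurable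
    (Eventually.of_forall fun x => ?_)
  have hp := gaussPdf_pos x
  simp only [Pi.add_apply, Real.norm_eq_abs]
  rw [abs_mul, abs_of_pos hp, ← add_mul]
  refine mul_le_mul_of_nonneg_right ?_ hp.le
  rw [mul_comm 2 n, pow_mul, abs_le]
  constructor <;> nlinarith [sq_nonneg (g x + x ^ n), sq_nonneg (g x - x ^ n),
    sq_nonneg (g x), sq_nonneg (x ^ n)]

/-- The Stein identity for the scale score: `E[X g'(X)] = E[g(X) (X² - 1)]`. -/
lemma integral_id_mul_deriv_mul_gaussPdf {g : ℝ → ℝ} (hg : ContDiff ℝ 1 g)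
    (hg2 : Integrable (fun x => g x ^ 2 * gaussPdf x))
    (hg1 : Integrable (fun x => x * deriv g x * gaussPdf x)) :
    ∫ x, x * deriv g x * gaussPdf x = ∫ x, g x * (x ^ 2 - 1) * gaussPdf x := by
  have hi := integrable_mul_pow_mul_gaussPdf hg.continuous hg2
  have key := integral_mul_deriv_eq_deriv_mul_of_integrable
    (u := g) (v := fun y => y * gaussPdf y) (u' := deriv g)
    (v' := fun x => (1 - x ^ 2) * gaussPdf x)
    (fun x _ => (hg.differentiable (by norm_num) x).hasDerivAt)
    (fun x _ => hasDerivAt_id_mul_gaussPdf x)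
    (((hi 0).sub (hi 2)).congr (Eventually.of_forall fun x => by
      simp only [Pi.sub_apply, Pi.mul_apply]; ring))
    (hg1.congr (Eventually.of_forall fun x => by simp only [Pi.mul_apply]; ring))
    ((hi 1).congr (Eventually.of_forall fun x => by simp only [Pi.mul_apply]; ring))
  calc ∫ x, x * deriv g x * gaussPdf x
      = ∫ x, deriv g x * (x * gaussPdf x) := by congr 1; ext x; ring
    _ = -∫ x, g x * ((1 - x ^ 2) * gaussPdf x) := by rw [key, neg_neg]
    _ = ∫ x, g x * (x ^ 2 - 1) * gaussPdf x := by
      rw [← integral_neg]; congr 1; ext x; ring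

lemma integral_gaussPdf : ∫ x, gaussPdf x = 1 := by
  rw [gaussPdf_eq]
  exact ProbabilityTheory.integral_gaussianPDFReal_eq_one 0 one_ne_zero

lemma integral_scale_score : ∫ x, (x ^ 2 - 1) * gaussPdf x = 0 := by
  have := integral_id_mul_deriv_mul_gaussPdf (g := fun _ => 1) contDiff_const
    (by simpa using integrable_pow_mul_gaussPdf 0) (by simp)
  simpa using this.symm

lemma integrable_scale_score : Integrable (fun x => (x ^ 2 - 1) * gaussPdf x) :=
  ((integrable_pow_mul_gaussPdf 2).sub (integrable_pow_mul_gaussPdf 0)).congr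
    (Eventually.of_forall fun x => by simp only [Pi.sub_apply]; ring)

lemma integrable_scale_score_sq : Integrable (fun x => (x ^ 2 - 1) ^ 2 * gaussPdf x) :=
  (((integrable_pow_mul_gaussPdf 4).sub ((integrable_pow_mul_gaussPdf 2).const_mul 2)).add
    (integrable_pow_mul_gaussPdf 0)).congr
    (Eventually.of_forall fun x => by simp only [Pi.sub_apply, Pi.add_apply]; ring)

/-- The scale Fisher information of the standard Gaussian. -/
lemma integral_scale_score_sq : ∫ x, (x ^ 2 - 1) ^ 2 * gaussPdf x = 2 := by
  have hd : ∀ x : ℝ, deriv (fun y : ℝ => y ^ 2 - 1) x = 2 * x := fun x => by simp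
  have h1 := integral_id_mul_deriv_mul_gaussPdf (g := fun y => y ^ 2 - 1) (by fun_prop)
    integrable_scale_score_sq
    (((integrable_pow_mul_gaussPdf 2).const_mul 2).congr
      (Eventually.of_forall fun x => by simp only [hd]; ring))
  have h2 : ∫ x, x * deriv (fun y : ℝ => y ^ 2 - 1) x * gaussPdf x
      = ∫ x, (2 * ((x ^ 2 - 1) * gaussPdf x) + 2 * gaussPdf x) := by
    congr 1; ext x; rw [hd]; ring
  rw [integral_add (integrable_scale_score.const_mul 2)
    ((by simpa using integrable_pow_mul_gaussPdf 0 : Integrable gaussPdf).const_mul 2),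
    integral_const_mul, integral_const_mul, integral_scale_score, integral_gaussPdf] at h2
  have h3 : ∫ x, (x ^ 2 - 1) ^ 2 * gaussPdf x
      = ∫ x, (x ^ 2 - 1) * (x ^ 2 - 1) * gaussPdf x := by congr 1; ext x; ring
  rw [h3, ← h1, h2]
  norm_num

/-- **Scale-based lower variance bound for the standard Gaussian** (Ley–Swan, from
Proposition 3.1 part 2 with `g₀ = φ`, `σ₀ = 1`; a bound of Klaassen (1985)).
If `X` is standard Gaussian then for every `C¹` function `h` with `E[h(X)²] < ∞` and
`E[|X h'(X)|] < ∞`, `(1/2)(E[X h'(X)])² ≤ Var[h(X)]`, with equality if and only if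
`h(x)` is proportional (up to additive constant) to `1 − x²`. -/
theorem gaussian_scale_lower_variance_bound
    (h : ℝ → ℝ) (hh : ContDiff ℝ 1 h)
    (hh2 : Integrable (fun x => h x ^ 2 * gaussPdf x))
    (hh1 : Integrable (fun x => x * deriv h x * gaussPdf x)) :
    (1 / 2) * (∫ x, x * deriv h x * gaussPdf x) ^ 2 ≤
      ∫ x, (h x - ∫ y, h y * gaussPdf y) ^ 2 * gaussPdf x ∧
    ((1 / 2) * (∫ x, x * deriv h x * gaussPdf x) ^ 2 =
        ∫ x, (h x - ∫ y, h y * gaussPdf y) ^ 2 * gaussPdf x ↔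
      ∃ c d : ℝ, ∀ᵐ x : ℝ, h x = c * (1 - x ^ 2) + d) := by
  have hc := hh.continuous
  have hi := integrable_mul_pow_mul_gaussPdf hc hh2
  have hA := integral_id_mul_deriv_mul_gaussPdf hh hh2 hh1
  rw [hA]
  set A := ∫ x, h x * (x ^ 2 - 1) * gaussPdf x with hAdef
  set m := ∫ y, h y * gaussPdf y with hm
  have hφ : Integrable gaussPdf := by simpa using integrable_pow_mul_gaussPdf 0
  have hh0 : Integrable (fun x => h x * gaussPdf x) := by simpa using hi 0
  have hs : Integrable (fun x => h x * (x ^ 2 - 1) * gaussPdf x) :=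
    ((hi 2).sub (hi 0)).congr (Eventually.of_forall fun x => by
      simp only [Pi.sub_apply]; ring)
  have hV : Integrable (fun x => (h x - m) ^ 2 * gaussPdf x) :=
    ((hh2.sub (hh0.const_mul (2 * m))).add (hφ.const_mul (m ^ 2))).congr
      (Eventually.of_forall fun x => by simp only [Pi.sub_apply, Pi.add_apply]; ring)
  have hexp : (fun x => (h x - m - A / 2 * (x ^ 2 - 1)) ^ 2 * gaussPdf x) =
      fun x => (h x - m) ^ 2 * gaussPdf x
        + ((-A) * (h x * (x ^ 2 - 1) * gaussPdf x)
          + ((A * m) * ((x ^ 2 - 1) * gaussPdf x)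
            + (A ^ 2 / 4) * ((x ^ 2 - 1) ^ 2 * gaussPdf x))) := by
    ext x; ring
  have i2 := hs.const_mul (-A)
  have i3 := integrable_scale_score.const_mul (A * m)
  have i4 := integrable_scale_score_sq.const_mul (A ^ 2 / 4)
  have i34 : Integrable (fun x => (A * m) * ((x ^ 2 - 1) * gaussPdf x)
      + (A ^ 2 / 4) * ((x ^ 2 - 1) ^ 2 * gaussPdf x)) := i3.add i4
  have i234 : Integrable (fun x => (-A) * (h x * (x ^ 2 - 1) * gaussPdf x)
      + ((A * m) * ((x ^ 2 - 1) * gaussPdf x)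
        + (A ^ 2 / 4) * ((x ^ 2 - 1) ^ 2 * gaussPdf x))) := i2.add i34
  have hDi : Integrable (fun x => (h x - m - A / 2 * (x ^ 2 - 1)) ^ 2 * gaussPdf x) := by
    rw [hexp]; exact hV.add i234
  have hD : ∫ x, (h x - m - A / 2 * (x ^ 2 - 1)) ^ 2 * gaussPdf x =
      (∫ x, (h x - m) ^ 2 * gaussPdf x) - 1 / 2 * A ^ 2 := by
    rw [hexp, integral_add hV i234, integral_add i2 i34,
      integral_add i3 i4, integral_const_mul, integral_const_mul, integral_const_mul,
      integral_scale_score, integral_scale_score_sq, ← hAdef]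
    ring
  have hnn : 0 ≤ fun x => (h x - m - A / 2 * (x ^ 2 - 1)) ^ 2 * gaussPdf x :=
    fun x => mul_nonneg (sq_nonneg _) (gaussPdf_pos x).le
  have hD0 := integral_nonneg (μ := volume) hnn
  refine ⟨by linarith, fun heq => ?_, ?_⟩
  · have h0 := (integral_eq_zero_iff_of_nonneg hnn hDi).1 (by rw [hD]; linarith)
    refine ⟨-(A / 2), m, ?_⟩
    filter_upwards [h0] with x hx
    have := (mul_eq_zero.1 hx).resolve_right (gaussPdf_pos x).ne'
    have := pow_eq_zero_iff (two_ne_zero) |>.1 this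
    linarith
  · rintro ⟨c, d, hcd⟩
    have hm' : m = d := by
      have : m = ∫ x, ((-c) * ((x ^ 2 - 1) * gaussPdf x) + d * gaussPdf x) :=
        integral_congr_ae (by filter_upwards [hcd] with x hx; rw [hx]; ring)
      rw [this, integral_add (integrable_scale_score.const_mul _) (hφ.const_mul _),
        integral_const_mul, integral_const_mul, integral_scale_score, integral_gaussPdf]
      ring
    have hA' : A = -2 * c := by
      have : A = ∫ x, ((-c) * ((x ^ 2 - 1) ^ 2 * gaussPdf x)
          + d * ((x ^ 2 - 1) * gaussPdf x)) :=
        integral_congr_ae (by filter_upwards [hcd] with x hx; rw [hx]; ring)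
      rw [this, integral_add (integrable_scale_score_sq.const_mul _)
        (integrable_scale_score.const_mul _),
        integral_const_mul, integral_const_mul, integral_scale_score, integral_scale_score_sq]
      ring
    have : ∫ x, (h x - m - A / 2 * (x ^ 2 - 1)) ^ 2 * gaussPdf x = 0 := by
      refine integral_eq_zero_of_ae ?_
      filter_upwards [hcd] with x hx
      rw [hx, hm', hA']
      simp only [Pi.zero_apply]
      ring
    linarith
end

section
/- Let λ > 0 and let X be exponentially distributed with rate λ (density λe^{-λx} on [0,∞)). Then for every continuously differentiable h : [0,∞) → ℝ with E[h(X)²] < ∞, E[|X h'(X)|] < ∞ and E[X (h'(X))²] < ∞: ( E[X h'(X)] )² ≤ Var[h(X)] ≤ (1/λ) E[ X (h'(X))² ], with equality if and only if h(x) is proportional (up to additive constant) to 1 − x. -/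
/-!
The mean of `h` is `m`, and `p(x) = λ e^{-λ x}`. Since `(x p)' = (1 - λ x) p`, integration by parts
gives the Stein identity `E[X h'(X)] = E[h(X) (λ X - 1)]` (`stein_identity`).

*Lower bound.* The variable `λ X - 1` has mean `0` and variance `1`, so with `A = E[X h'(X)]` one has
`E[(h(X) - m - A (λ X - 1))²] = Var h(X) - A²` (`residual_eq`). This is nonnegative, and it vanishes
only if `h(x) = m + A (λ x - 1)` almost everywhere, which is the equality case.

*Upper bound.* Let `a = 1/λ` be the zero of the score and `G(x) = ∫_a^x h'²`. Cauchy–Schwarz gives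
`(h(x) - h(a))² ≤ (x - a) G(x)`, while `(x p G)' = -λ (x - a) p G + x p h'²`. Integrating the latter
over `[0, R]` and discarding the nonnegative boundary term yields
`λ E[(h(X) - h(a))²] ≤ E[X h'(X)²]`, and the variance is at most `E[(h(X) - h(a))²]`.

All of this is done for functions differentiable on the whole line; a `C¹` function on `[0, ∞)` is
first extended to such a function (`exists_extension`).
-/

open MeasureTheory Filter Set

/-- The exponential density with rate `λ` on `[0,∞)`. -/
noncomputable def expPdf (lam x : ℝ) : ℝ := lam * Real.exp (-(lam * x))

lemma continuous_expPdf (lam : ℝ) : Continuous (expPdf lam) := by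
  unfold expPdf; fun_prop

lemma expPdf_pos {lam : ℝ} (hlam : 0 < lam) (x : ℝ) : 0 < expPdf lam x := by
  unfold expPdf; positivity

lemma hasDerivAt_expPdf (lam x : ℝ) : HasDerivAt (expPdf lam) (-lam * expPdf lam x) x := by
  unfold expPdf
  have h1 : HasDerivAt (fun y : ℝ => -(lam * y)) (-lam) x := by
    simpa using ((hasDerivAt_id x).const_mul lam).fun_neg
  exact (h1.exp.const_mul lam).congr_deriv (by ring)

lemma moment {lam : ℝ} (hlam : 0 < lam) (k : ℕ) :
    IntegrableOn (fun x => x ^ k * expPdf lam x) (Ioi 0) ∧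
      ∫ x in Ioi (0 : ℝ), x ^ k * expPdf lam x = k.factorial / lam ^ k := by
  have key := Real.integral_rpow_mul_exp_neg_mul_Ioi (a := (k : ℝ) + 1) (by positivity) hlam
  simp only [add_sub_cancel_right, Real.rpow_natCast, Real.Gamma_nat_eq_factorial] at key
  -- A nonzero Bochner integral certifies integrability.
  have hint : IntegrableOn (fun x : ℝ => x ^ k * Real.exp (-(lam * x))) (Ioi 0) :=
    .of_integral_ne_zero (by rw [key]; positivity)
  have he : (fun x => x ^ k * expPdf lam x)
      = fun x => lam * (x ^ k * Real.exp (-(lam * x))) := by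
    funext x; unfold expPdf; ring
  rw [he]
  refine ⟨hint.const_mul lam, ?_⟩
  rw [integral_const_mul, key]
  have : (1 / lam) ^ ((k : ℝ) + 1) = 1 / lam ^ (k + 1) := by
    rw [show ((k : ℝ) + 1) = ((k + 1 : ℕ) : ℝ) by push_cast; ring, Real.rpow_natCast]
    simp
  rw [this]
  field_simp
  ring

/-- `H xᵏ` is integrable by `2 |H xᵏ| ≤ H² + x²ᵏ`. -/
lemma integrableOn_mul_pow {lam : ℝ} (hlam : 0 < lam) {H : ℝ → ℝ} (hH : Continuous H)
    (h2 : IntegrableOn (fun x => H x ^ 2 * expPdf lam x) (Ioi 0)) (k : ℕ) :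
    IntegrableOn (fun x => H x * x ^ k * expPdf lam x) (Ioi 0) := by
  have hc := continuous_expPdf lam
  refine (h2.add (moment hlam (2 * k)).1).mono' (by fun_prop) (ae_of_all _ fun x => ?_)
  have hp := (expPdf_pos hlam x).le
  simp only [Pi.add_apply, norm_mul, Real.norm_eq_abs, abs_of_nonneg hp]
  rw [← add_mul]
  refine mul_le_mul_of_nonneg_right ?_ hp
  rw [← abs_mul, pow_mul']
  refine abs_le.2 ⟨?_, ?_⟩ <;>
    nlinarith [sq_nonneg (H x + x ^ k), sq_nonneg (H x - x ^ k), sq_nonneg (H x),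
      sq_nonneg (x ^ k)]

/-- Expectation of a general quadratic polynomial in `H(X)` and `X`; the second-moment computations
below are instances. -/
lemma quadratic_expectation {lam : ℝ} (hlam : 0 < lam) {H : ℝ → ℝ} (hH : Continuous H)
    (h2 : IntegrableOn (fun x => H x ^ 2 * expPdf lam x) (Ioi 0)) (α β γ a b c : ℝ) :
    IntegrableOn (fun x =>
      (α * H x ^ 2 + β * (H x * x) + γ * H x + a * x ^ 2 + b * x + c) * expPdf lam x) (Ioi 0) ∧
    ∫ x in Ioi (0 : ℝ),
      (α * H x ^ 2 + β * (H x * x) + γ * H x + a * x ^ 2 + b * x + c) * expPdf lam x =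
      α * (∫ x in Ioi (0 : ℝ), H x ^ 2 * expPdf lam x)
        + β * (∫ x in Ioi (0 : ℝ), H x * x * expPdf lam x)
        + γ * (∫ x in Ioi (0 : ℝ), H x * expPdf lam x) + a * (2 / lam ^ 2) + b * (1 / lam) + c := by
  have i1 : IntegrableOn (fun x => H x * x * expPdf lam x) (Ioi 0) := by
    simpa using integrableOn_mul_pow hlam hH h2 1
  have i0 : IntegrableOn (fun x => H x * expPdf lam x) (Ioi 0) := by
    simpa using integrableOn_mul_pow hlam hH h2 0
  obtain ⟨m2, e2⟩ := moment hlam 2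
  obtain ⟨m1, e1⟩ := moment hlam 1
  obtain ⟨m0, e0⟩ := moment hlam 0
  simp only [pow_one, pow_zero, one_mul, Nat.factorial_zero, Nat.factorial_one,
    Nat.factorial_two, Nat.cast_one, Nat.cast_ofNat, div_one] at m1 e1 m0 e0 e2
  have he : (fun x =>
      (α * H x ^ 2 + β * (H x * x) + γ * H x + a * x ^ 2 + b * x + c) * expPdf lam x)
      = fun x => α * (H x ^ 2 * expPdf lam x) + β * (H x * x * expPdf lam x)
        + γ * (H x * expPdf lam x) + a * (x ^ 2 * expPdf lam x) + b * (x * expPdf lam x)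
        + c * expPdf lam x := by
    funext x; ring
  have j1 := h2.const_mul α
  have j2 := j1.fun_add (i1.const_mul β)
  have j3 := j2.fun_add (i0.const_mul γ)
  have j4 := j3.fun_add (m2.const_mul a)
  have j5 := j4.fun_add (m1.const_mul b)
  have j6 := j5.fun_add (m0.const_mul c)
  rw [he]
  refine ⟨j6, ?_⟩
  rw [integral_add j5 (m0.const_mul c), integral_add j4 (m1.const_mul b),
    integral_add j3 (m2.const_mul a), integral_add j2 (i0.const_mul γ),
    integral_add j1 (i1.const_mul β)]
  simp only [integral_const_mul, e2, e1, e0, mul_one]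

lemma stein_identity {lam : ℝ} (hlam : 0 < lam) {H g : ℝ → ℝ}
    (hd : ∀ x, HasDerivAt H (g x) x)
    (h2 : IntegrableOn (fun x => H x ^ 2 * expPdf lam x) (Ioi 0))
    (h1 : IntegrableOn (fun x => x * g x * expPdf lam x) (Ioi 0)) :
    ∫ x in Ioi (0 : ℝ), x * g x * expPdf lam x =
      lam * (∫ x in Ioi (0 : ℝ), H x * x * expPdf lam x)
        - ∫ x in Ioi (0 : ℝ), H x * expPdf lam x := by
  have hH : Continuous H := continuous_iff_continuousAt.2 fun x => (hd x).continuousAt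
  have hF : ∀ x, HasDerivAt (fun x => H x * x * expPdf lam x)
      ((0 * H x ^ 2 + (-lam) * (H x * x) + 1 * H x + 0 * x ^ 2 + 0 * x + 0) * expPdf lam x
        + x * g x * expPdf lam x) x := by
    intro x
    exact (((hd x).fun_mul (hasDerivAt_id' x)).fun_mul (hasDerivAt_expPdf lam x)).congr_deriv
      (by ring)
  obtain ⟨q, e⟩ := quadratic_expectation hlam hH h2 0 (-lam) 1 0 0 0
  have i1 : IntegrableOn (fun x => H x * x * expPdf lam x) (Ioi 0) := by
    simpa using integrableOn_mul_pow hlam hH h2 1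
  have hc := continuous_expPdf lam
  have lim := tendsto_zero_of_hasDerivAt_of_integrableOn_Ioi (fun x _ => hF x) (q.add h1) i1
  have key := integral_Ioi_of_hasDerivAt_of_tendsto
    (by fun_prop) (fun x _ => hF x) (q.add h1) lim
  rw [integral_add q h1, e] at key
  simp only [mul_zero, zero_mul] at key
  linarith

/-- Mean squared error of approximating `H(X)` by `c + A (λ X - 1)`. The case `A = 0` is the second
moment about `c`, in particular the variance when `c` is the mean. -/
lemma residual_eq {lam : ℝ} (hlam : 0 < lam) {H : ℝ → ℝ} (hH : Continuous H)
    (h2 : IntegrableOn (fun x => H x ^ 2 * expPdf lam x) (Ioi 0)) (c A : ℝ) :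
    IntegrableOn (fun x => (H x - c - A * (lam * x - 1)) ^ 2 * expPdf lam x) (Ioi 0) ∧
    ∫ x in Ioi (0 : ℝ), (H x - c - A * (lam * x - 1)) ^ 2 * expPdf lam x =
      (∫ x in Ioi (0 : ℝ), H x ^ 2 * expPdf lam x)
        - 2 * A * (lam * (∫ x in Ioi (0 : ℝ), H x * x * expPdf lam x)
            - ∫ x in Ioi (0 : ℝ), H x * expPdf lam x)
        - 2 * c * (∫ x in Ioi (0 : ℝ), H x * expPdf lam x) + c ^ 2 + A ^ 2 := by
  obtain ⟨q, e⟩ := quadratic_expectation hlam hH h2 1 (-(2 * A * lam)) (2 * A - 2 * c)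
    (A ^ 2 * lam ^ 2) (2 * c * A * lam - 2 * A ^ 2 * lam) (c ^ 2 - 2 * c * A + A ^ 2)
  have he : (fun x => (H x - c - A * (lam * x - 1)) ^ 2 * expPdf lam x) = fun x =>
      (1 * H x ^ 2 + -(2 * A * lam) * (H x * x) + (2 * A - 2 * c) * H x
        + (A ^ 2 * lam ^ 2) * x ^ 2 + (2 * c * A * lam - 2 * A ^ 2 * lam) * x
        + (c ^ 2 - 2 * c * A + A ^ 2)) * expPdf lam x := by
    funext x; ring
  rw [he]
  refine ⟨q, e.trans ?_⟩
  field_simp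
  ring

lemma sq_integral_le_of_le {g : ℝ → ℝ} (hg : Continuous g) {a x : ℝ} (hax : a ≤ x) :
    (∫ y in a..x, g y) ^ 2 ≤ (x - a) * ∫ y in a..x, g y ^ 2 := by
  rcases hax.eq_or_lt with rfl | hlt
  · simp
  set S := ∫ y in a..x, g y with hS
  set Q := ∫ y in a..x, g y ^ 2 with hQ
  have h0 : 0 ≤ ∫ y in a..x, ((x - a) * g y - S) ^ 2 :=
    intervalIntegral.integral_nonneg hax fun y _ => sq_nonneg _
  have he : ∫ y in a..x, ((x - a) * g y - S) ^ 2
      = (x - a) ^ 2 * Q - 2 * (x - a) * S * S + (x - a) * S ^ 2 := by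
    have : (fun y => ((x - a) * g y - S) ^ 2)
        = fun y => (x - a) ^ 2 * g y ^ 2 - 2 * (x - a) * S * g y + S ^ 2 := by
      funext y; ring
    rw [this, intervalIntegral.integral_add, intervalIntegral.integral_sub,
      intervalIntegral.integral_const_mul, intervalIntegral.integral_const_mul,
      intervalIntegral.integral_const, smul_eq_mul]
    all_goals exact Continuous.intervalIntegrable (by fun_prop) _ _
  rw [he] at h0
  have h3 : 0 ≤ (x - a) * ((x - a) * Q - S ^ 2) := by linarith
  have := nonneg_of_mul_nonneg_right h3 (sub_pos.2 hlt)
  linarith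

/-- Cauchy–Schwarz for an oriented interval. -/
lemma sq_integral_le {g : ℝ → ℝ} (hg : Continuous g) (a x : ℝ) :
    (∫ y in a..x, g y) ^ 2 ≤ (x - a) * ∫ y in a..x, g y ^ 2 := by
  rcases le_total a x with hax | hax
  · exact sq_integral_le_of_le hg hax
  · have := sq_integral_le_of_le hg hax
    rw [intervalIntegral.integral_symm x a, intervalIntegral.integral_symm x a]
    linarith

/-- Weighted Poincaré inequality centred at the zero `1/λ` of the scale score. -/
lemma centred_upper_bound {lam : ℝ} (hlam : 0 < lam) {H g : ℝ → ℝ} (hg : Continuous g)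
    (hd : ∀ x, HasDerivAt H (g x) x)
    (h2 : IntegrableOn (fun x => (H x - H (1 / lam)) ^ 2 * expPdf lam x) (Ioi 0))
    (hg2 : IntegrableOn (fun x => x * g x ^ 2 * expPdf lam x) (Ioi 0)) :
    ∫ x in Ioi (0 : ℝ), (H x - H (1 / lam)) ^ 2 * expPdf lam x ≤
      (1 / lam) * ∫ x in Ioi (0 : ℝ), x * g x ^ 2 * expPdf lam x := by
  have hH : Continuous H := continuous_iff_continuousAt.2 fun x => (hd x).continuousAt
  have hc := continuous_expPdf lam
  set a := 1 / lam with ha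
  have hla : lam * a = 1 := by rw [ha]; field_simp
  let G : ℝ → ℝ := fun x => ∫ y in a..x, g y ^ 2
  have hGd : ∀ x, HasDerivAt G (g x ^ 2) x := fun x =>
    intervalIntegral.integral_hasDerivAt_right
      (Continuous.intervalIntegrable (by fun_prop) _ _)
      (Continuous.stronglyMeasurableAtFilter (by fun_prop) _ _)
      (by fun_prop)
  have hG : Continuous G := continuous_iff_continuousAt.2 fun x => (hGd x).continuousAt
  have hcs : ∀ x, (H x - H a) ^ 2 ≤ (x - a) * G x := by
    intro x
    rw [← intervalIntegral.integral_eq_sub_of_hasDerivAt (fun y _ => hd y)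
      (hg.intervalIntegrable _ _)]
    exact sq_integral_le hg a x
  have hF : ∀ x, HasDerivAt (fun x => x * expPdf lam x * G x)
      (x * g x ^ 2 * expPdf lam x - lam * ((x - a) * G x * expPdf lam x)) x := by
    intro x
    exact (((hasDerivAt_id' x).fun_mul (hasDerivAt_expPdf lam x)).fun_mul (hGd x)).congr_deriv
      (by linear_combination (-(G x * expPdf lam x)) * hla)
  refine le_of_tendsto_of_tendsto (intervalIntegral_tendsto_integral_Ioi 0 h2 tendsto_id)
    ((intervalIntegral_tendsto_integral_Ioi 0 hg2 tendsto_id).const_mul (1 / lam)) ?_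
  filter_upwards [eventually_ge_atTop a, eventually_ge_atTop 0] with R hR hR0
  simp only [id]
  have hI := intervalIntegral.integral_eq_sub_of_hasDerivAt (a := 0) (b := R) (fun y _ => hF y)
    (Continuous.intervalIntegrable (by fun_prop) _ _)
  rw [intervalIntegral.integral_sub (Continuous.intervalIntegrable (by fun_prop) _ _)
    (Continuous.intervalIntegrable (by fun_prop) _ _), intervalIntegral.integral_const_mul] at hI
  have hGR : 0 ≤ G R := intervalIntegral.integral_nonneg hR fun y _ => sq_nonneg _
  have hb : 0 ≤ R * expPdf lam R * G R :=
    mul_nonneg (mul_nonneg hR0 (expPdf_pos hlam R).le) hGR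
  have hmono : ∫ x in (0 : ℝ)..R, (H x - H a) ^ 2 * expPdf lam x
      ≤ ∫ x in (0 : ℝ)..R, (x - a) * G x * expPdf lam x :=
    intervalIntegral.integral_mono_on hR0 (Continuous.intervalIntegrable (by fun_prop) _ _)
      (Continuous.intervalIntegrable (by fun_prop) _ _)
      fun x _ => mul_le_mul_of_nonneg_right (hcs x) (expPdf_pos hlam x).le
  refine hmono.trans ?_
  rw [one_div, le_inv_mul_iff₀ hlam]
  simp only [zero_mul, sub_zero] at hI
  linarith

/-- All three functionals evaluated at an affine function. -/
lemma affine_equality {lam : ℝ} (hlam : 0 < lam) {H g : ℝ → ℝ}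
    (hd : ∀ x, HasDerivAt H (g x) x) {c d : ℝ} (he : EqOn H (fun x => c * (1 - x) + d) (Ioi 0)) :
    (∫ x in Ioi (0 : ℝ), x * g x * expPdf lam x) = -c / lam ∧
    ∫ x in Ioi (0 : ℝ), (H x - ∫ y in Ioi (0 : ℝ), H y * expPdf lam y) ^ 2 * expPdf lam x
      = c ^ 2 / lam ^ 2 ∧
    ∫ x in Ioi (0 : ℝ), x * g x ^ 2 * expPdf lam x = c ^ 2 / lam := by
  have hgc : ∀ x ∈ Ioi (0 : ℝ), g x = -c := by
    intro x hx
    have h1 : HasDerivAt (fun x : ℝ => c * (1 - x) + d) (-c) x := by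
      simpa using (((hasDerivAt_id x).const_sub 1).const_mul c).add_const d
    exact (hd x).unique (h1.congr_of_eventuallyEq (he.eventuallyEq_of_mem (Ioi_mem_nhds hx)))
  have quad := fun a b k => (quadratic_expectation hlam (H := fun _ => 0) continuous_const
    (by simp) 0 0 0 a b k).2
  simp only [mul_zero, zero_mul, zero_add] at quad
  have hm : ∫ y in Ioi (0 : ℝ), H y * expPdf lam y = -c * (1 / lam) + (c + d) := by
    have := quad 0 (-c) (c + d)
    simp only [zero_mul, zero_add] at this
    rw [← this]
    refine setIntegral_congr_fun measurableSet_Ioi fun x hx => ?_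
    simp only [he hx]; ring
  refine ⟨?_, ?_, ?_⟩
  · have := quad 0 (-c) 0
    simp only [zero_mul, zero_add, add_zero] at this
    rw [neg_div, div_eq_mul_one_div, ← neg_mul, ← this]
    refine setIntegral_congr_fun measurableSet_Ioi fun x hx => ?_
    simp only [hgc x hx]; ring
  · rw [hm]
    have := quad (c ^ 2) (-(2 * c ^ 2 / lam)) (c ^ 2 / lam ^ 2)
    have e : c ^ 2 / lam ^ 2 = c ^ 2 * (2 / lam ^ 2) + -(2 * c ^ 2 / lam) * (1 / lam)
        + c ^ 2 / lam ^ 2 := by field_simp; ring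
    rw [e, ← this]
    refine setIntegral_congr_fun measurableSet_Ioi fun x hx => ?_
    simp only [he hx]; field_simp; ring
  · have := quad 0 (c ^ 2) 0
    simp only [zero_mul, zero_add, add_zero] at this
    rw [div_eq_mul_one_div, ← this]
    refine setIntegral_congr_fun measurableSet_Ioi fun x hx => ?_
    simp only [hgc x hx]; ring

/-- The derivative is extended by its value at `0`, and the function by integration. -/
lemma exists_extension {h : ℝ → ℝ} (hh : ContDiffOn ℝ 1 h (Ici 0)) :
    ∃ H g : ℝ → ℝ, Continuous g ∧ (∀ x, HasDerivAt H (g x) x) ∧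
      EqOn h H (Ici 0) ∧ EqOn (derivWithin h (Ici 0)) g (Ici 0) := by
  have hcont := hh.continuousOn_derivWithin (uniqueDiffOn_Ici 0) le_rfl
  let g : ℝ → ℝ := fun x => derivWithin h (Ici 0) (max x 0)
  have hg : Continuous g := by
    refine hcont.comp_continuous (by fun_prop) fun x => ?_
    simp
  have hgE : EqOn (derivWithin h (Ici 0)) g (Ici 0) := fun x hx => by
    simp only [g, max_eq_left (mem_Ici.1 hx)]
  refine ⟨fun x => h 0 + ∫ y in (0 : ℝ)..x, g y, g, hg, fun x => ?_, fun x hx => ?_, hgE⟩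
  · exact (intervalIntegral.integral_hasDerivAt_right (hg.intervalIntegrable _ _)
      (hg.stronglyMeasurableAtFilter _ _) hg.continuousAt).const_add _
  · have := intervalIntegral.integral_eq_sub_of_hasDeriv_right_of_le (f := h) (f' := g)
      (mem_Ici.1 hx) (hh.continuousOn.mono Icc_subset_Ici_self) (fun y hy => by
        have hy' : y ∈ Ici (0 : ℝ) := hy.1.le
        have := ((hh.differentiableOn one_ne_zero) y hy').hasDerivWithinAt
        rw [hgE hy'] at this
        exact this.mono fun z hz => (hy.1.trans hz).le)
      (hg.intervalIntegrable _ _)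
    simp only [this]; ring

/-- The variance bounds for a function with continuous derivative on the whole line. -/
lemma bounds_of_hasDerivAt {lam : ℝ} (hlam : 0 < lam) {H g : ℝ → ℝ} (hg : Continuous g)
    (hd : ∀ x, HasDerivAt H (g x) x)
    (h2 : IntegrableOn (fun x => H x ^ 2 * expPdf lam x) (Ioi 0))
    (h1 : IntegrableOn (fun x => x * g x * expPdf lam x) (Ioi 0))
    (hg2 : IntegrableOn (fun x => x * g x ^ 2 * expPdf lam x) (Ioi 0)) :
    (∫ x in Ioi (0 : ℝ), x * g x * expPdf lam x) ^ 2 ≤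
      ∫ x in Ioi (0 : ℝ), (H x - ∫ y in Ioi (0 : ℝ), H y * expPdf lam y) ^ 2 * expPdf lam x ∧
    ∫ x in Ioi (0 : ℝ), (H x - ∫ y in Ioi (0 : ℝ), H y * expPdf lam y) ^ 2 * expPdf lam x ≤
      (1 / lam) * ∫ x in Ioi (0 : ℝ), x * g x ^ 2 * expPdf lam x ∧
    (((∫ x in Ioi (0 : ℝ), x * g x * expPdf lam x) ^ 2 =
        ∫ x in Ioi (0 : ℝ), (H x - ∫ y in Ioi (0 : ℝ), H y * expPdf lam y) ^ 2 * expPdf lam x ∧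
      ∫ x in Ioi (0 : ℝ), (H x - ∫ y in Ioi (0 : ℝ), H y * expPdf lam y) ^ 2 * expPdf lam x =
        (1 / lam) * ∫ x in Ioi (0 : ℝ), x * g x ^ 2 * expPdf lam x) ↔
      ∃ c d : ℝ, H =ᵐ[volume.restrict (Ioi 0)] fun x => c * (1 - x) + d) := by
  have hH : Continuous H := continuous_iff_continuousAt.2 fun x => (hd x).continuousAt
  have hS := stein_identity hlam hd h2 h1
  set A := ∫ x in Ioi (0 : ℝ), x * g x * expPdf lam x with hA
  set m := ∫ y in Ioi (0 : ℝ), H y * expPdf lam y with hm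
  have hV := (residual_eq hlam hH h2 m 0).2
  obtain ⟨hCi, hC⟩ := residual_eq hlam hH h2 (H (1 / lam)) 0
  obtain ⟨hRi, hR⟩ := residual_eq hlam hH h2 m A
  simp only [zero_mul, sub_zero, mul_zero] at hV hC hCi
  rw [← hm] at hV hC hR
  rw [← hS] at hR
  have hnn : ∀ x, 0 ≤ (H x - m - A * (lam * x - 1)) ^ 2 * expPdf lam x := fun x =>
    mul_nonneg (sq_nonneg _) (expPdf_pos hlam x).le
  have hR0 : 0 ≤ ∫ x in Ioi (0 : ℝ), (H x - m - A * (lam * x - 1)) ^ 2 * expPdf lam x :=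
    integral_nonneg hnn
  have hup := centred_upper_bound hlam hg hd hCi hg2
  refine ⟨?_, ?_, ?_, ?_⟩
  · nlinarith
  · nlinarith [sq_nonneg (m - H (1 / lam))]
  · rintro ⟨hlow, -⟩
    -- Equality in the lower bound alone makes the residual vanish.
    have h0 : ∫ x in Ioi (0 : ℝ), (H x - m - A * (lam * x - 1)) ^ 2 * expPdf lam x = 0 := by
      nlinarith
    rw [setIntegral_eq_zero_iff_of_nonneg_ae (ae_of_all _ hnn) hRi] at h0
    refine ⟨-A * lam, m - A + A * lam, ?_⟩
    filter_upwards [h0] with x hx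
    have h3 : H x - m - A * (lam * x - 1) = 0 := by
      simpa [(expPdf_pos hlam x).ne'] using hx
    linarith
  · rintro ⟨c, d, hcd⟩
    have heq : EqOn H (fun x => c * (1 - x) + d) (Ioi 0) :=
      Measure.eqOn_open_of_ae_eq hcd isOpen_Ioi hH.continuousOn (by fun_prop)
    obtain ⟨e1, e2, e3⟩ := affine_equality hlam hd heq
    rw [← hA] at e1
    rw [← hm] at e2
    rw [e1, e2, e3]
    constructor <;> field_simp

/-- **Scale-based variance bounds for the exponential distribution** (equation (3.9)
of Ley–Swan). Let `X ∼ Exp(λ)`, `λ > 0`. For every continuously differentiable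
`h : [0,∞) → ℝ` with `E[h(X)²] < ∞`, `E[|X h'(X)|] < ∞` and `E[X(h'(X))²] < ∞`,
`(E[X h'(X)])² ≤ Var[h(X)] ≤ (1/λ) E[X (h'(X))²]`, with equality if and only if `h(x)`
is proportional (up to additive constant) to `1 − x`. -/
theorem exponential_variance_bounds
    (lam : ℝ) (hlam : 0 < lam)
    (h : ℝ → ℝ) (hh : ContDiffOn ℝ 1 h (Set.Ici 0))
    (hh2 : IntegrableOn (fun x => h x ^ 2 * expPdf lam x) (Set.Ici 0))
    (hh1 : IntegrableOn
      (fun x => x * derivWithin h (Set.Ici 0) x * expPdf lam x) (Set.Ici 0))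
    (hh'2 : IntegrableOn
      (fun x => x * (derivWithin h (Set.Ici 0) x) ^ 2 * expPdf lam x) (Set.Ici 0)) :
    (∫ x in Set.Ici (0 : ℝ), x * derivWithin h (Set.Ici 0) x * expPdf lam x) ^ 2 ≤
      ∫ x in Set.Ici (0 : ℝ),
        (h x - ∫ y in Set.Ici (0 : ℝ), h y * expPdf lam y) ^ 2 * expPdf lam x ∧
    ∫ x in Set.Ici (0 : ℝ),
        (h x - ∫ y in Set.Ici (0 : ℝ), h y * expPdf lam y) ^ 2 * expPdf lam x ≤
      (1 / lam) * ∫ x in Set.Ici (0 : ℝ),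
        x * (derivWithin h (Set.Ici 0) x) ^ 2 * expPdf lam x ∧
    (((∫ x in Set.Ici (0 : ℝ), x * derivWithin h (Set.Ici 0) x * expPdf lam x) ^ 2 =
        ∫ x in Set.Ici (0 : ℝ),
          (h x - ∫ y in Set.Ici (0 : ℝ), h y * expPdf lam y) ^ 2 * expPdf lam x ∧
      ∫ x in Set.Ici (0 : ℝ),
          (h x - ∫ y in Set.Ici (0 : ℝ), h y * expPdf lam y) ^ 2 * expPdf lam x =
        (1 / lam) * ∫ x in Set.Ici (0 : ℝ),
          x * (derivWithin h (Set.Ici 0) x) ^ 2 * expPdf lam x) ↔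
      ∃ c d : ℝ, ∀ᵐ x : ℝ, 0 ≤ x → h x = c * (1 - x) + d) := by
  obtain ⟨H, g, hg, hd, hE, hgE⟩ := exists_extension hh
  -- The half-lines `[0, ∞)` and `(0, ∞)` differ by a null set.
  simp only [integral_Ici_eq_integral_Ioi]
  rw [integrableOn_Ici_iff_integrableOn_Ioi] at hh2 hh1 hh'2
  have hE' : ∀ x ∈ Ioi (0 : ℝ), h x = H x := fun x hx => hE (mem_Ioi.1 hx).le
  have hgE' : ∀ x ∈ Ioi (0 : ℝ), derivWithin h (Ici 0) x = g x := fun x hx => hgE (mem_Ioi.1 hx).le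
  have key := bounds_of_hasDerivAt hlam hg hd
    (hh2.congr_fun (fun x hx => by simp only [hE' x hx]) measurableSet_Ioi)
    (hh1.congr_fun (fun x hx => by simp only [hgE' x hx]) measurableSet_Ioi)
    (hh'2.congr_fun (fun x hx => by simp only [hgE' x hx]) measurableSet_Ioi)
  have r1 : ∫ y in Ioi (0 : ℝ), h y * expPdf lam y = ∫ y in Ioi (0 : ℝ), H y * expPdf lam y :=
    setIntegral_congr_fun measurableSet_Ioi fun x hx => by simp only [hE' x hx]
  have r2 : ∀ m : ℝ, ∫ x in Ioi (0 : ℝ), (h x - m) ^ 2 * expPdf lam x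
      = ∫ x in Ioi (0 : ℝ), (H x - m) ^ 2 * expPdf lam x := fun m =>
    setIntegral_congr_fun measurableSet_Ioi fun x hx => by simp only [hE' x hx]
  have r3 : ∫ x in Ioi (0 : ℝ), x * derivWithin h (Ici 0) x * expPdf lam x
      = ∫ x in Ioi (0 : ℝ), x * g x * expPdf lam x :=
    setIntegral_congr_fun measurableSet_Ioi fun x hx => by simp only [hgE' x hx]
  have r4 : ∫ x in Ioi (0 : ℝ), x * derivWithin h (Ici 0) x ^ 2 * expPdf lam x
      = ∫ x in Ioi (0 : ℝ), x * g x ^ 2 * expPdf lam x :=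
    setIntegral_congr_fun measurableSet_Ioi fun x hx => by simp only [hgE' x hx]
  have r5 : ∀ c d : ℝ, (∀ᵐ x : ℝ, 0 ≤ x → h x = c * (1 - x) + d) ↔
      H =ᵐ[volume.restrict (Ioi 0)] fun x => c * (1 - x) + d := by
    intro c d
    rw [Measure.restrict_congr_set (Ioi_ae_eq_Ici (μ := volume) (a := (0 : ℝ))),
      Filter.EventuallyEq, ae_restrict_iff' measurableSet_Ici]
    refine eventually_congr (ae_of_all _ fun x => ?_)
    exact forall_congr' fun hx => by rw [hE hx]
  simp only [r1, r2, r3, r4, r5]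
  exact key
end

section
/- Let a > 1 and let X have the Gamma distribution with shape a and rate 1, i.e. density x^{a−1}e^{−x}/Γ(a) on (0,∞). Then for every continuously differentiable h : (0,∞) → ℝ with E[h(X)²] < ∞ and E[(h'(X))² X²] < ∞: Var[h(X)] ≤ (1/(a−1)) E[ (h'(X))² X² ]. If moreover a > 2 and E[|h'(X)|] < ∞, then also (a−2) ( E[h'(X)] )² ≤ Var[h(X)]. -/
/-!
Write `p` for the density, `φ(x) = -p'(x)/p(x) = (x - (a-1))/x` for its location score, so that
`φ'(x) = (a-1)/x² > 0`, and let `c = a - 1` be the zero of `φ`.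

*Upper bound.* With `H = h - h(c)`, the function `G = p H²/φ` (extended by `0` at `c`) satisfies
`G' = -p H² + 2 p H h'/φ - p H² φ'/φ² ≤ p h'²/φ' - p H²` by the inequality
`2 s t ≤ s² φ' + t²/φ'`. As `G` has the sign of `φ`, it is `≤ 0` left of `c`, `0` at `c` and `≥ 0`
right of `c`, so integrating over `[u, v] ∋ c` gives `0 ≤ G(v) - G(u) ≤ ∫ (p h'²/φ' - p H²)` with
no boundary terms to control. Letting `u → 0`, `v → ∞` yields `E[H²] ≤ E[h'²/φ']`
(`integral_sq_sub_le`), and `Var[h] ≤ E[H²]`.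

*Lower bound.* Since `(p h)' = p h' - φ p h` is integrable, `p h` has limits at both ends of
`(0, ∞)`; they vanish because `p h` and `p h / x` are integrable (`integral_deriv_eq_zero`). Hence
`E[h'] = E[φ h]`. The claim is then `0 ≤ E[(h - E h - t φ)²]` at `t = (a-2) E[h']`, using
`E[φ] = 0` and `E[φ²] = 1/(a-2)`.
-/

open MeasureTheory Filter Set Real

/-- The Gamma density with shape `a` and rate `1` on `(0,∞)`. -/
noncomputable def gammaPdf1 (a x : ℝ) : ℝ := x ^ (a - 1) * Real.exp (-x) / Real.Gamma a

open scoped Topology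

lemma integrable_pointwise_sub {μ : Measure ℝ} {f g : ℝ → ℝ} (hf : Integrable f μ)
    (hg : Integrable g μ) : Integrable (fun x => f x - g x) μ := hf.sub hg

lemma gammaPdf1_pos {a x : ℝ} (ha : 0 < a) (hx : 0 < x) : 0 < gammaPdf1 a x := by
  have := Real.Gamma_pos_of_pos ha
  unfold gammaPdf1
  positivity

lemma integrableOn_gammaPdf1 {a : ℝ} (ha : 0 < a) : IntegrableOn (gammaPdf1 a) (Ioi 0) := by
  refine IntegrableOn.congr_fun ((Real.GammaIntegral_convergent ha).div_const (Real.Gamma a)) ?_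
    measurableSet_Ioi
  intro x _
  simp only [gammaPdf1, mul_comm]

lemma integral_gammaPdf1 {a : ℝ} (ha : 0 < a) : ∫ x in Ioi 0, gammaPdf1 a x = 1 := by
  have h : ∀ x, gammaPdf1 a x = (Real.exp (-x) * x ^ (a - 1)) / Real.Gamma a := fun x => by
    simp only [gammaPdf1, mul_comm]
  simp_rw [h]
  rw [integral_div, ← Real.Gamma_eq_integral ha, div_self (Real.Gamma_pos_of_pos ha).ne']

/-- Dividing the density by `x` lowers the shape by one; this gives the inverse moments. -/
lemma gammaPdf1_div {a x : ℝ} (ha : 1 < a) (hx : 0 < x) :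
    gammaPdf1 a x / x = gammaPdf1 (a - 1) x / (a - 1) := by
  have h1 : Real.Gamma a = (a - 1) * Real.Gamma (a - 1) := by
    have := Real.Gamma_add_one (s := a - 1) (by linarith)
    simpa using this
  have h2 := Real.Gamma_pos_of_pos (s := a - 1) (by linarith)
  have h3 : x ^ (a - 1) = x ^ (a - 1 - 1) * x := by
    rw [← Real.rpow_add_one hx.ne']; congr 1; ring
  have h4 : a - 1 ≠ 0 := by linarith
  unfold gammaPdf1
  rw [h1, h3]
  field_simp

lemma hasDerivAt_gammaPdf1 (a : ℝ) {x : ℝ} (hx : 0 < x) :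
    HasDerivAt (gammaPdf1 a) (-((x - (a - 1)) / x * gammaPdf1 a x)) x := by
  have h1 : HasDerivAt (fun y : ℝ => y ^ (a - 1)) ((a - 1) * x ^ (a - 1 - 1)) x :=
    Real.hasDerivAt_rpow_const (Or.inl hx.ne')
  have h2 : HasDerivAt (fun y : ℝ => Real.exp (-y)) (-Real.exp (-x)) x := by
    simpa using (hasDerivAt_neg x).exp
  refine ((h1.mul h2).div_const (Real.Gamma a)).congr_deriv ?_
  have h3 : x ^ (a - 1) = x ^ (a - 1 - 1) * x := by
    rw [← Real.rpow_add_one hx.ne']; congr 1; ring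
  unfold gammaPdf1
  rw [h3]
  field_simp
  ring

lemma continuousOn_gammaPdf1 (a : ℝ) : ContinuousOn (gammaPdf1 a) (Ioi 0) :=
  fun _ hx => (hasDerivAt_gammaPdf1 a hx).continuousAt.continuousWithinAt

lemma integrableOn_mul_gammaPdf1 {a : ℝ} (ha : 0 < a) {u v : ℝ → ℝ}
    (hu : ContinuousOn u (Ioi 0)) (hv : ContinuousOn v (Ioi 0))
    (hu2 : IntegrableOn (fun x => u x ^ 2 * gammaPdf1 a x) (Ioi 0))
    (hv2 : IntegrableOn (fun x => v x ^ 2 * gammaPdf1 a x) (Ioi 0)) :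
    IntegrableOn (fun x => u x * v x * gammaPdf1 a x) (Ioi 0) := by
  refine Integrable.mono' (hu2.add hv2)
    (((hu.mul hv).mul (continuousOn_gammaPdf1 a)).aestronglyMeasurable measurableSet_Ioi) ?_
  refine ae_restrict_of_forall_mem measurableSet_Ioi fun x hx => ?_
  have hp := gammaPdf1_pos ha hx
  simp only [Pi.add_apply]
  rw [Real.norm_eq_abs, abs_mul, abs_of_pos hp, ← add_mul]
  refine mul_le_mul_of_nonneg_right ?_ hp.le
  rw [abs_le]
  constructor <;> nlinarith [sq_nonneg (u x + v x), sq_nonneg (u x - v x), sq_nonneg (u x),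
    sq_nonneg (v x)]

/-- If `f`, `f'` and `f x / x` are integrable on `(0, ∞)`, there are no boundary terms: at `0`
a nonzero limit of `f` would make `1/x` integrable. -/
lemma integral_deriv_eq_zero {f f' : ℝ → ℝ} (hd : ∀ x ∈ Ioi (0 : ℝ), HasDerivAt f (f' x) x)
    (hf' : IntegrableOn f' (Ioi 0)) (hf : IntegrableOn f (Ioi 0))
    (hfx : IntegrableOn (fun x => f x / x) (Ioi 0)) : ∫ x in Ioi 0, f' x = 0 := by
  have htop := tendsto_zero_of_hasDerivAt_of_integrableOn_Ioi hd hf' hf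
  have hcov : AECover (volume.restrict (Ioi (0 : ℝ))) (𝓝[>] (0 : ℝ)) fun i : ℝ => Ioi i :=
    aecover_Ioi_of_Ioi (tendsto_nhdsWithin_of_tendsto_nhds tendsto_id)
  have hlim := hcov.integral_tendsto_of_countably_generated hf'
  have hlim2 : Tendsto (fun i => -f i) (𝓝[>] (0 : ℝ)) (𝓝 (∫ x in Ioi 0, f' x)) := by
    refine hlim.congr' ?_
    filter_upwards [self_mem_nhdsWithin] with i hi
    have hsub : Ioi i ⊆ Ioi (0 : ℝ) := Ioi_subset_Ioi (le_of_lt hi)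
    rw [Measure.restrict_restrict measurableSet_Ioi, inter_eq_left.2 hsub,
      integral_Ioi_of_hasDerivAt_of_tendsto' (fun x hx => hd x (mem_Ioi.2 (lt_of_lt_of_le hi hx)))
        (hf'.mono_set hsub) htop, zero_sub]
  by_contra hL
  set L := ∫ x in Ioi 0, f' x with hLdef
  have hLpos : 0 < |L| := abs_pos.2 hL
  have hev : ∀ᶠ i in 𝓝[>] (0 : ℝ), |L| / 2 < |f i| := by
    have := hlim2.abs.eventually (lt_mem_nhds (half_lt_self hLpos))
    simpa using this
  obtain ⟨δ, hδ, hsub⟩ := mem_nhdsGT_iff_exists_Ioo_subset.1 hev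
  have hδ0 : (0 : ℝ) < δ := hδ
  have hint : IntegrableOn (fun x : ℝ => x ^ (-1 : ℝ)) (Ioo 0 δ) := by
    refine Integrable.mono'
      (((hfx.mono_set (Ioo_subset_Ioi_self : Ioo 0 δ ⊆ Ioi (0 : ℝ))).norm).const_mul (2 / |L|))
      (by fun_prop) ?_
    refine ae_restrict_of_forall_mem measurableSet_Ioo fun x hx => ?_
    have hx0 : 0 < x := hx.1
    have hfL : |L| / 2 < |f x| := hsub hx
    rw [Real.rpow_neg_one, norm_div, Real.norm_eq_abs, Real.norm_eq_abs, Real.norm_eq_abs,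
      abs_of_pos hx0, abs_of_pos (inv_pos.2 hx0), inv_eq_one_div, ← mul_div_assoc]
    refine div_le_div_of_nonneg_right ?_ hx0.le
    rw [div_mul_eq_mul_div, le_div_iff₀ hLpos]
    linarith
  rw [intervalIntegral.integrableOn_Ioo_rpow_iff hδ0] at hint
  exact lt_irrefl _ hint

/-- The weighted Poincaré inequality, centred at the zero `a - 1` of the score. -/
lemma integral_sq_sub_le {a : ℝ} (ha : 1 < a) {h : ℝ → ℝ} (hh : ContDiffOn ℝ 1 h (Ioi 0))
    (hH2 : IntegrableOn (fun x => (h x - h (a - 1)) ^ 2 * gammaPdf1 a x) (Ioi 0))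
    (hh'2 : IntegrableOn (fun x => (deriv h x) ^ 2 * x ^ 2 * gammaPdf1 a x) (Ioi 0)) :
    ∫ x in Ioi 0, (h x - h (a - 1)) ^ 2 * gammaPdf1 a x ≤
      (1 / (a - 1)) * ∫ x in Ioi 0, (deriv h x) ^ 2 * x ^ 2 * gammaPdf1 a x := by
  obtain ⟨c, hc⟩ : ∃ c, c = a - 1 := ⟨_, rfl⟩
  have hc0 : 0 < c := by linarith
  rw [← hc] at hH2 ⊢
  have hdiff : ∀ x ∈ Ioi (0 : ℝ), HasDerivAt h (deriv h x) x := fun x hx =>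
    ((hh.differentiableOn one_ne_zero).differentiableAt (Ioi_mem_nhds hx)).hasDerivAt
  -- The integrand `p h'²/φ' - p H²`.
  let R : ℝ → ℝ := fun x => 1 / c * ((deriv h x) ^ 2 * x ^ 2 * gammaPdf1 a x)
    - (h x - h c) ^ 2 * gammaPdf1 a x
  have hR : IntegrableOn R (Ioi 0) := (hh'2.const_mul (1 / c)).sub hH2
  -- `G = p H²/φ`; one factor `H / (x - c)` is written as a `dslope`, which is continuous at `c`.
  let G : ℝ → ℝ := fun x => gammaPdf1 a x * x * (dslope h c x * (h x - h c))
  have hGcont : ContinuousOn G (Ioi 0) :=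
    ((continuousOn_gammaPdf1 a).mul continuousOn_id).mul
      (((continuousOn_dslope (Ioi_mem_nhds hc0)).2
        ⟨hh.continuousOn, (hdiff c hc0).differentiableAt⟩).mul
        (hh.continuousOn.sub continuousOn_const))
  have hGeq : ∀ x, x ≠ c → G x = gammaPdf1 a x * x * (h x - h c) ^ 2 / (x - c) := by
    intro x hx
    have : x - c ≠ 0 := sub_ne_zero.2 hx
    simp only [G, dslope_of_ne _ hx, slope_def_field]
    field_simp
  have hGc : G c = 0 := by simp [G]
  let G' : ℝ → ℝ := fun x =>
    ((-((x - c) / x * gammaPdf1 a x) * x + gammaPdf1 a x * 1) * (h x - h c) ^ 2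
      + gammaPdf1 a x * x * (2 * (h x - h c) * deriv h x)) / (x - c)
      - gammaPdf1 a x * x * (h x - h c) ^ 2 / (x - c) ^ 2
  have hGder : ∀ x ∈ Ioi (0 : ℝ), x ≠ c → HasDerivAt G (G' x) x := by
    intro x hx hxc
    have hxc' : x - c ≠ 0 := sub_ne_zero.2 hxc
    have h1 := hasDerivAt_gammaPdf1 a hx
    rw [← hc] at h1
    have h2 := (h1.mul (hasDerivAt_id x)).mul (((hdiff x hx).sub_const (h c)).pow 2)
    have h3 := h2.div ((hasDerivAt_id x).sub_const c) hxc'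
    refine (h3.congr_of_eventuallyEq ?_).congr_deriv ?_
    · filter_upwards [isOpen_ne.mem_nhds hxc] with y hy
      simpa using hGeq y hy
    · simp only [G', Pi.mul_apply, Pi.pow_apply, id]
      have : x ≠ 0 := ne_of_gt hx
      push_cast
      field_simp
  have hGle : ∀ x ∈ Ioi (0 : ℝ), x ≠ c → G' x ≤ R x := by
    intro x hx hxc
    have hx0 : 0 < x := hx
    have hp := gammaPdf1_pos (a := a) (by linarith) hx0
    have hxc' : x - c ≠ 0 := sub_ne_zero.2 hxc
    have key : R x - G' x = gammaPdf1 a x / c *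
        (deriv h x * x - c * (h x - h c) / (x - c)) ^ 2 := by
      simp only [R, G']
      field_simp
      ring
    have : 0 ≤ R x - G' x := by rw [key]; positivity
    linarith
  have hGright : ∀ v, c ≤ v → 0 ≤ G v := by
    intro v hv
    rcases hv.eq_or_lt with rfl | hv
    · exact hGc.ge
    rw [hGeq v hv.ne']
    have := gammaPdf1_pos (a := a) (x := v) (by linarith) (by linarith)
    have : 0 < v := by linarith
    have : 0 < v - c := by linarith
    positivity
  have hGleft : ∀ u, 0 < u → u ≤ c → G u ≤ 0 := by
    intro u hu0 hu
    rcases hu.eq_or_lt with rfl | hu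
    · exact hGc.le
    rw [hGeq u hu.ne]
    have := gammaPdf1_pos (a := a) (x := u) (by linarith) (by linarith)
    exact div_nonpos_of_nonneg_of_nonpos (by positivity) (by linarith)
  have hstep : ∀ u v, 0 < u → u ≤ v → (v ≤ c ∨ c ≤ u) → G v - G u ≤ ∫ y in u..v, R y := by
    intro u v hu huv hcase
    have hsub : Icc u v ⊆ Ioi 0 := fun x hx => lt_of_lt_of_le hu hx.1
    have hne : ∀ x ∈ Ioo u v, x ≠ c := by
      rintro x hx rfl
      rcases hcase with h | h
      · exact absurd hx.2 (not_lt.2 h)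
      · exact absurd hx.1 (not_lt.2 h)
    exact intervalIntegral.sub_le_integral_of_hasDeriv_right_of_le huv (hGcont.mono hsub)
      (fun x hx => (hGder x (hsub (Ioo_subset_Icc_self hx)) (hne x hx)).hasDerivWithinAt)
      (hR.mono_set hsub) (fun x hx => hGle x (hsub (Ioo_subset_Icc_self hx)) (hne x hx))
  -- Exhaust `(0, ∞)` by the intervals `(u, u⁻¹]` as `u → 0`.
  have hcov : AECover (volume.restrict (Ioi (0 : ℝ))) (𝓝[>] (0 : ℝ))
      fun i : ℝ => Ioi i ∩ Iic i⁻¹ :=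
    (aecover_Ioi_of_Ioi (tendsto_nhdsWithin_of_tendsto_nhds tendsto_id)).inter
      (aecover_Iic tendsto_inv_nhdsGT_zero)
  have hlim := hcov.integral_tendsto_of_countably_generated hR
  have hnonneg : 0 ≤ ∫ x in Ioi 0, R x := by
    refine ge_of_tendsto hlim ?_
    filter_upwards [self_mem_nhdsWithin, nhdsWithin_le_nhds (Iio_mem_nhds hc0),
      tendsto_inv_nhdsGT_zero.eventually (eventually_ge_atTop c)] with u hu huc hcv
    have hu0 : 0 < u := hu
    have huc' : u ≤ c := le_of_lt huc
    have hsub : Ioc u u⁻¹ ⊆ Ioi (0 : ℝ) := fun x hx => lt_trans hu0 hx.1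
    rw [Ioi_inter_Iic, Measure.restrict_restrict measurableSet_Ioc, inter_eq_left.2 hsub,
      ← intervalIntegral.integral_of_le (huc'.trans hcv)]
    have hI : ∀ s t : ℝ, 0 < s → s ≤ t → IntervalIntegrable R volume s t := fun s t hs hst =>
      (intervalIntegrable_iff_integrableOn_Ioc_of_le hst).2
        (hR.mono_set fun x hx => lt_trans hs hx.1)
    rw [← intervalIntegral.integral_add_adjacent_intervals (hI u c hu0 huc') (hI c _ hc0 hcv)]
    have h1 := hstep u c hu0 huc' (Or.inl le_rfl)
    have h2 := hstep c u⁻¹ hc0 hcv (Or.inr le_rfl)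
    have h3 := hGleft u hu0 huc'
    have h4 := hGright _ hcv
    linarith
  have hval : ∫ x in Ioi 0, R x = 1 / c * (∫ x in Ioi 0, (deriv h x) ^ 2 * x ^ 2 * gammaPdf1 a x)
      - ∫ x in Ioi 0, (h x - h c) ^ 2 * gammaPdf1 a x := by
    simp only [R]
    rw [integral_sub (hh'2.const_mul (1 / c)) hH2, integral_const_mul]
  linarith

/-- `E[(h - c)²] = E[h²] - 2 c E[h] + c²`. -/
lemma integral_sq_sub_const {a : ℝ} (ha : 0 < a) {h : ℝ → ℝ} (c : ℝ)
    (hh2 : IntegrableOn (fun x => h x ^ 2 * gammaPdf1 a x) (Ioi 0))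
    (hh1 : IntegrableOn (fun x => h x * gammaPdf1 a x) (Ioi 0)) :
    IntegrableOn (fun x => (h x - c) ^ 2 * gammaPdf1 a x) (Ioi 0) ∧
    ∫ x in Ioi 0, (h x - c) ^ 2 * gammaPdf1 a x =
      (∫ x in Ioi 0, h x ^ 2 * gammaPdf1 a x)
        - 2 * c * (∫ x in Ioi 0, h x * gammaPdf1 a x) + c ^ 2 := by
  have hp := integrableOn_gammaPdf1 ha
  have heq : (fun x => (h x - c) ^ 2 * gammaPdf1 a x) = fun x =>
      h x ^ 2 * gammaPdf1 a x - 2 * c * (h x * gammaPdf1 a x) + c ^ 2 * gammaPdf1 a x := by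
    funext x; ring
  have i1 := hh1.const_mul (2 * c)
  have i2 := hp.const_mul (c ^ 2)
  rw [heq]
  refine ⟨(hh2.sub i1).add i2, ?_⟩
  rw [integral_add (integrable_pointwise_sub hh2 i1) i2, integral_sub hh2 i1, integral_const_mul, integral_const_mul,
    integral_gammaPdf1 ha, mul_one]

/-- The score `φ` has mean `0` and Fisher information `1/(a-2)`. -/
lemma score_moments {a : ℝ} (ha : 2 < a) :
    IntegrableOn (fun x => (x - (a - 1)) / x * gammaPdf1 a x) (Ioi 0) ∧
    ∫ x in Ioi 0, (x - (a - 1)) / x * gammaPdf1 a x = 0 ∧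
    IntegrableOn (fun x => ((x - (a - 1)) / x) ^ 2 * gammaPdf1 a x) (Ioi 0) ∧
    ∫ x in Ioi 0, ((x - (a - 1)) / x) ^ 2 * gammaPdf1 a x = 1 / (a - 2) := by
  have i0 := integrableOn_gammaPdf1 (a := a) (by linarith)
  have i1 := integrableOn_gammaPdf1 (a := a - 1) (by linarith)
  have i2 := integrableOn_gammaPdf1 (a := a - 1 - 1) (by linarith)
  have I0 := integral_gammaPdf1 (a := a) (by linarith)
  have I1 := integral_gammaPdf1 (a := a - 1) (by linarith)
  have I2 := integral_gammaPdf1 (a := a - 1 - 1) (by linarith)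
  have e1 : EqOn (fun x => gammaPdf1 a x - gammaPdf1 (a - 1) x)
      (fun x => (x - (a - 1)) / x * gammaPdf1 a x) (Ioi 0) := by
    intro x hx
    have hx0 : x ≠ 0 := ne_of_gt hx
    have h1 := gammaPdf1_div (a := a) (by linarith) hx
    have ha1 : a - 1 ≠ 0 := by linarith
    have h2 : gammaPdf1 (a - 1) x = (a - 1) * (gammaPdf1 a x / x) := by rw [h1]; field_simp
    simp only [h2]
    field_simp
  have e2 : EqOn (fun x => gammaPdf1 a x - 2 * gammaPdf1 (a - 1) x
        + (a - 1) / (a - 2) * gammaPdf1 (a - 1 - 1) x)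
      (fun x => ((x - (a - 1)) / x) ^ 2 * gammaPdf1 a x) (Ioi 0) := by
    intro x hx
    have hx0 : x ≠ 0 := ne_of_gt hx
    have h1 := gammaPdf1_div (a := a) (by linarith) hx
    have h1' := gammaPdf1_div (a := a - 1) (by linarith) hx
    have ha1 : a - 1 ≠ 0 := by linarith
    have ha2 : a - 2 ≠ 0 := by linarith
    have ha2' : a - 1 - 1 = a - 2 := by ring
    have h2 : gammaPdf1 (a - 1) x = (a - 1) * (gammaPdf1 a x / x) := by rw [h1]; field_simp
    have h3 : gammaPdf1 (a - 1 - 1) x = (a - 2) * (gammaPdf1 (a - 1) x / x) := by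
      rw [h1', ha2']; field_simp
    simp only [h3, h2]
    field_simp
    ring
  have i2' := i2.const_mul ((a - 1) / (a - 2))
  have i1' := i1.const_mul 2
  refine ⟨(i0.sub i1).congr_fun e1 measurableSet_Ioi, ?_,
    ((i0.sub i1').add i2').congr_fun e2 measurableSet_Ioi, ?_⟩
  · rw [← setIntegral_congr_fun measurableSet_Ioi e1, integral_sub i0 i1, I0, I1, sub_self]
  · rw [← setIntegral_congr_fun measurableSet_Ioi e2, integral_add (integrable_pointwise_sub i0 i1') i2',
      integral_sub i0 i1', integral_const_mul, integral_const_mul, I0, I1, I2]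
    have ha2 : a - 2 ≠ 0 := by linarith
    field_simp
    ring

/-- **Location-based variance bounds for the Gamma distribution** (equation (3.11) of
Ley–Swan). Let `X ∼ Gamma(a,1)` with `a > 1`. For every continuously differentiable
`h : (0,∞) → ℝ` with `E[h(X)²] < ∞` and `E[(h'(X))² X²] < ∞`,
`Var[h(X)] ≤ (1/(a−1)) E[(h'(X))² X²]`; if moreover `a > 2` and `E[|h'(X)|] < ∞`, also
`(a−2)(E[h'(X)])² ≤ Var[h(X)]`. -/
theorem gamma_location_variance_bounds
    (a : ℝ) (ha : 1 < a)
    (h : ℝ → ℝ) (hh : ContDiffOn ℝ 1 h (Set.Ioi 0))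
    (hh2 : IntegrableOn (fun x => h x ^ 2 * gammaPdf1 a x) (Set.Ioi 0))
    (hh'2 : IntegrableOn
      (fun x => (deriv h x) ^ 2 * x ^ 2 * gammaPdf1 a x) (Set.Ioi 0)) :
    ∫ x in Set.Ioi (0 : ℝ),
        (h x - ∫ y in Set.Ioi (0 : ℝ), h y * gammaPdf1 a y) ^ 2 * gammaPdf1 a x ≤
      (1 / (a - 1)) * ∫ x in Set.Ioi (0 : ℝ),
        (deriv h x) ^ 2 * x ^ 2 * gammaPdf1 a x ∧
    (2 < a → IntegrableOn (fun x => deriv h x * gammaPdf1 a x) (Set.Ioi 0) →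
      (a - 2) * (∫ x in Set.Ioi (0 : ℝ), deriv h x * gammaPdf1 a x) ^ 2 ≤
        ∫ x in Set.Ioi (0 : ℝ),
          (h x - ∫ y in Set.Ioi (0 : ℝ), h y * gammaPdf1 a y) ^ 2 * gammaPdf1 a x) := by
  have ha0 : 0 < a := by linarith
  have hhc : ContinuousOn h (Ioi 0) := hh.continuousOn
  have hh1 : IntegrableOn (fun x => h x * gammaPdf1 a x) (Ioi 0) := by
    have := integrableOn_mul_gammaPdf1 ha0 hhc (v := fun _ => 1) continuousOn_const hh2
      (by simpa using integrableOn_gammaPdf1 ha0)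
    simpa using this
  obtain ⟨m, hm⟩ : ∃ m, m = ∫ y in Ioi (0 : ℝ), h y * gammaPdf1 a y := ⟨_, rfl⟩
  rw [← hm]
  obtain ⟨hVint, hV⟩ := integral_sq_sub_const ha0 m hh2 hh1
  rw [← hm] at hV
  constructor
  · obtain ⟨hCint, hC⟩ := integral_sq_sub_const ha0 (h (a - 1)) hh2 hh1
    rw [← hm] at hC
    have := integral_sq_sub_le ha hh hCint hh'2
    nlinarith [sq_nonneg (m - h (a - 1))]
  · intro ha2 hh'1
    obtain ⟨hs1, hs1', hs2, hs2'⟩ := score_moments ha2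
    have hsc : ContinuousOn (fun x : ℝ => (x - (a - 1)) / x) (Ioi 0) :=
      (continuousOn_id.sub continuousOn_const).div continuousOn_id fun x hx => ne_of_gt hx
    have hsh : IntegrableOn (fun x => (x - (a - 1)) / x * h x * gammaPdf1 a x) (Ioi 0) :=
      integrableOn_mul_gammaPdf1 ha0 hsc hhc hs2 hh2
    -- Integration by parts: `E[h'] = E[φ h]`. Integrability of `p h / x` comes from
    -- `1/x = (1 - φ)/(a - 1)`.
    have hstein : ∫ x in Ioi (0 : ℝ), deriv h x * gammaPdf1 a x
        = ∫ x in Ioi (0 : ℝ), (x - (a - 1)) / x * h x * gammaPdf1 a x := by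
      have hz := integral_deriv_eq_zero (f := fun x => h x * gammaPdf1 a x)
        (f' := fun x => deriv h x * gammaPdf1 a x - (x - (a - 1)) / x * h x * gammaPdf1 a x)
        (fun x hx => by
          have h1 : HasDerivAt h (deriv h x) x :=
            ((hh.differentiableOn one_ne_zero).differentiableAt (Ioi_mem_nhds hx)).hasDerivAt
          exact (h1.mul (hasDerivAt_gammaPdf1 a hx)).congr_deriv (by ring))
        (hh'1.sub hsh) hh1
        (IntegrableOn.congr_fun ((hh1.sub hsh).const_mul (1 / (a - 1))) (fun x hx => by
          have hx0 : x ≠ 0 := ne_of_gt hx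
          have ha1 : a - 1 ≠ 0 := by linarith
          simp only [Pi.sub_apply]
          field_simp
          ring) measurableSet_Ioi)
      rw [integral_sub hh'1 hsh] at hz
      linarith
    obtain ⟨D, hD⟩ : ∃ D, D = ∫ x in Ioi (0 : ℝ), deriv h x * gammaPdf1 a x := ⟨_, rfl⟩
    rw [← hD] at hstein ⊢
    obtain ⟨t, ht⟩ : ∃ t, t = (a - 2) * D := ⟨_, rfl⟩
    have hsq : 0 ≤ ∫ x in Ioi (0 : ℝ), (h x - m - t * ((x - (a - 1)) / x)) ^ 2 * gammaPdf1 a x :=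
      setIntegral_nonneg measurableSet_Ioi fun x hx =>
        mul_nonneg (sq_nonneg _) (gammaPdf1_pos ha0 hx).le
    have hexp : (fun x => (h x - m - t * ((x - (a - 1)) / x)) ^ 2 * gammaPdf1 a x) = fun x =>
        (h x - m) ^ 2 * gammaPdf1 a x - 2 * t * ((x - (a - 1)) / x * h x * gammaPdf1 a x)
        + 2 * t * m * ((x - (a - 1)) / x * gammaPdf1 a x)
        + t ^ 2 * (((x - (a - 1)) / x) ^ 2 * gammaPdf1 a x) := by
      funext x; ring
    have j1 := hsh.const_mul (2 * t)
    have j2 := hs1.const_mul (2 * t * m)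
    have j3 := hs2.const_mul (t ^ 2)
    rw [hexp, integral_add (Integrable.fun_add (integrable_pointwise_sub hVint j1) j2) j3,
      integral_add (integrable_pointwise_sub hVint j1) j2,
      integral_sub hVint j1, integral_const_mul, integral_const_mul, integral_const_mul,
      hs1', hs2', ← hstein] at hsq
    have hne : a - 2 ≠ 0 := by linarith
    have hfin : 2 * t * D - t ^ 2 * (1 / (a - 2)) = (a - 2) * D ^ 2 := by
      rw [ht]; field_simp; ring
    linarith
end

section
/- Let a > 0, b > 0 and let X have the Gamma distribution with shape a and rate b, i.e. density b^a x^{a−1}e^{−bx}/Γ(a) on (0,∞). Then for every continuously differentiable h : (0,∞) → ℝ with E[h(X)²] < ∞, E[|X h'(X)|] < ∞ and E[X (h'(X))²] < ∞: (1/a) ( E[X h'(X)] )² ≤ Var[h(X)] ≤ (1/b) E[ X (h'(X))² ], with equality if and only if h(x) is proportional (up to additive constant) to a − x. -/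
/-!
Let `p` be the Gamma density and `M` the mean of `h(X)`. Everything rests on the equation
`(x p)' = (a - b x) p` (`hasDerivAt_mul_gammaPdf`).

Lower bound. Integrating the derivative of `x p h` gives `K := E[X h'(X)] = E[(bX - a) h(X)]`
(`stein_identity`); the boundary terms vanish because `p h`, which is `x p h` divided by `x`, is
integrable while `1/x` is not, at either end. Since `E[bX - a] = 0` and `E[(bX - a)²] = a`, expanding
`0 ≤ E[(h(X) - M - (K/a)(bX - a))²]` yields `Var h(X) - K²/a ≥ 0`, and equality forces `h` to be
affine.

Upper bound. Put `m = a / b` and `F x = ∫ t in m..x, h' t ^ 2`. Cauchy–Schwarz gives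
`(h x - h m)² ≤ (x - m) F x`, and `b (x - m) p F = x p h'² - (x p F)'`. On `[ε, R]` containing `m` the
boundary terms of `x p F` have the favourable sign since `F R ≥ 0 ≥ F ε`, so
`Var h(X) ≤ E[(h(X) - h m)²] ≤ (1/b) E[X h'(X)²]` after letting `ε → 0` and `R → ∞`.

If `h` is affine, the two outer terms are equal, hence so is the variance between them.
-/

open MeasureTheory Filter Set Real

/-- The Gamma density with shape `a` and rate `b` on `(0,∞)`. -/
noncomputable def gammaPdf (a b x : ℝ) : ℝ :=
  b ^ a * x ^ (a - 1) * Real.exp (-(b * x)) / Real.Gamma a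

open scoped Topology

lemma gammaPdf_pos {a b x : ℝ} (ha : 0 < a) (hb : 0 < b) (hx : 0 < x) : 0 < gammaPdf a b x := by
  unfold gammaPdf
  have := Real.Gamma_pos_of_pos ha
  positivity

lemma continuousOn_gammaPdf (a b : ℝ) : ContinuousOn (gammaPdf a b) (Ioi 0) := by
  unfold gammaPdf
  intro x hx
  have hx' : x ≠ 0 := ne_of_gt hx
  apply ContinuousAt.continuousWithinAt
  have h1 : ContinuousAt (fun x : ℝ => x ^ (a - 1)) x := Real.continuousAt_rpow_const _ _ (Or.inl hx')
  fun_prop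

/-- The Gamma density satisfies the Pearson-type equation `(x p)' = (a - b x) p`. -/
lemma hasDerivAt_mul_gammaPdf (a b : ℝ) {x : ℝ} (hx : 0 < x) :
    HasDerivAt (fun x => x * gammaPdf a b x) ((a - b * x) * gammaPdf a b x) x := by
  have h1 : HasDerivAt (fun x : ℝ => x ^ (a - 1)) ((a - 1) * x ^ (a - 1 - 1)) x :=
    Real.hasDerivAt_rpow_const (Or.inl hx.ne')
  have h2 : HasDerivAt (fun x : ℝ => Real.exp (-(b * x))) (Real.exp (-(b * x)) * (-(b * 1))) x :=
    (((hasDerivAt_id x).const_mul b).neg).exp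
  have h3 := (hasDerivAt_id x).mul (((h1.const_mul (b ^ a)).mul h2).div_const (Real.Gamma a))
  refine h3.congr_deriv ?_
  have h4 : x ^ (a - 1) = x ^ (a - 1 - 1) * x := by
    rw [Real.rpow_sub_one hx.ne' (a - 1)]; field_simp
  simp only [gammaPdf, id, Pi.mul_apply, h4]
  ring

lemma gammaPdf_moment {a b : ℝ} (ha : 0 < a) (hb : 0 < b) (k : ℕ) :
    IntegrableOn (fun x => x ^ k * gammaPdf a b x) (Ioi 0) ∧
    ∫ x in Ioi (0 : ℝ), x ^ k * gammaPdf a b x =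
      Real.Gamma (a + k) / (b ^ k * Real.Gamma a) := by
  have hk : 0 < a + k := by positivity
  have hΓ := Real.Gamma_pos_of_pos ha
  have hΓ' := Real.Gamma_pos_of_pos hk
  have key := Real.integral_rpow_mul_exp_neg_mul_Ioi hk hb
  have hint : IntegrableOn (fun x : ℝ => x ^ (a + k - 1) * Real.exp (-(b * x))) (Ioi 0) :=
    .of_integral_ne_zero (by rw [key]; positivity)
  have heq : EqOn (fun x : ℝ => x ^ k * gammaPdf a b x)
      (fun x => b ^ a / Real.Gamma a * (x ^ (a + k - 1) * Real.exp (-(b * x)))) (Ioi 0) := by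
    intro x hx
    have : x ^ (a + k - 1) = x ^ k * x ^ (a - 1) := by
      rw [show a + k - 1 = k + (a - 1) by ring, Real.rpow_add hx, Real.rpow_natCast]
    simp only [gammaPdf, this]
    ring
  refine ⟨(integrableOn_congr_fun heq measurableSet_Ioi).2 (hint.const_mul _), ?_⟩
  rw [setIntegral_congr_fun measurableSet_Ioi heq, integral_const_mul, key,
    Real.div_rpow zero_le_one hb.le, Real.one_rpow, Real.rpow_add hb, Real.rpow_natCast]
  have : (0:ℝ) < b ^ a := by positivity
  field_simp

lemma gammaPdf_integral {a b : ℝ} (ha : 0 < a) (hb : 0 < b) :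
    IntegrableOn (fun x => gammaPdf a b x) (Ioi 0) ∧
    ∫ x in Ioi (0 : ℝ), gammaPdf a b x = 1 := by
  have := gammaPdf_moment ha hb 0
  simpa [(Real.Gamma_pos_of_pos ha).ne'] using this

lemma gammaPdf_mean {a b : ℝ} (ha : 0 < a) (hb : 0 < b) :
    IntegrableOn (fun x => x * gammaPdf a b x) (Ioi 0) ∧
    ∫ x in Ioi (0 : ℝ), x * gammaPdf a b x = a / b := by
  have := gammaPdf_moment ha hb 1
  have hΓ := Real.Gamma_pos_of_pos ha
  simp only [pow_one, Nat.cast_one, Real.Gamma_add_one ha.ne'] at this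
  refine ⟨this.1, this.2.trans ?_⟩
  field_simp

lemma gammaPdf_second_moment {a b : ℝ} (ha : 0 < a) (hb : 0 < b) :
    IntegrableOn (fun x => x ^ 2 * gammaPdf a b x) (Ioi 0) ∧
    ∫ x in Ioi (0 : ℝ), x ^ 2 * gammaPdf a b x = a * (a + 1) / b ^ 2 := by
  have := gammaPdf_moment ha hb 2
  have hΓ := Real.Gamma_pos_of_pos ha
  have h2 : Real.Gamma (a + (2 : ℕ)) = (a + 1) * (a * Real.Gamma a) := by
    rw [← Real.Gamma_add_one ha.ne', ← Real.Gamma_add_one (by positivity)]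
    congr 1; push_cast; ring
  refine ⟨this.1, this.2.trans ?_⟩
  rw [h2]
  field_simp

/-- `1/x` is integrable neither near `0` nor near `∞`, so a limit of `W` at such an end is zero as
soon as `W x / x` is integrable. -/
lemma limit_eq_zero_of_integrableOn_div {W : ℝ → ℝ} {L : ℝ} (l : Filter ℝ) [NeBot l]
    [TendstoIxxClass Icc l l] (hl : Ioi (0 : ℝ) ∈ l)
    (hlog : Tendsto (fun x => ‖Real.log x‖) l atTop)
    (hW : Tendsto W l (𝓝 L)) (hint : IntegrableOn (fun x => W x / x) (Ioi 0)) : L = 0 := by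
  by_contra hL
  refine not_integrableOn_of_tendsto_norm_atTop_of_deriv_isBigO_filter (f := Real.log) l hl ?_ hlog
    ?_ hint
  · filter_upwards [hl] with x hx
    exact Real.differentiableAt_log (ne_of_gt hx)
  · have hpos : 0 < |L| := abs_pos.2 hL
    have hev : ∀ᶠ x in l, |L| / 2 < |W x| :=
      hW.abs.eventually (lt_mem_nhds (by linarith))
    refine Asymptotics.IsBigO.of_bound (2 / |L|) ?_
    filter_upwards [hev, hl] with x hx hx0
    have hx0' : 0 < x := hx0
    rw [Real.deriv_log, norm_inv, norm_div, Real.norm_eq_abs, Real.norm_eq_abs, abs_of_pos hx0']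
    have : 1 ≤ 2 / |L| * |W x| := by
      rw [div_mul_eq_mul_div, le_div_iff₀ hpos]; linarith
    calc x⁻¹ = 1 * x⁻¹ := (one_mul _).symm
      _ ≤ 2 / |L| * |W x| * x⁻¹ := by gcongr
      _ = _ := by ring

/-- A fundamental theorem of calculus on `(0, ∞)` with no boundary terms: integrability of `W'`
gives limits at both ends, and integrability of `W x / x` forces them to vanish. -/
lemma integral_Ioi_deriv_eq_zero {W W' : ℝ → ℝ} (hW : ∀ x ∈ Ioi (0 : ℝ), HasDerivAt W (W' x) x)
    (hW' : IntegrableOn W' (Ioi 0)) (hint : IntegrableOn (fun x => W x / x) (Ioi 0)) :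
    ∫ x in Ioi (0 : ℝ), W' x = 0 := by
  have htop := tendsto_limUnder_of_hasDerivAt_of_integrableOn_Ioi hW hW'
  rw [limit_eq_zero_of_integrableOn_div atTop (Ioi_mem_atTop 0)
    (tendsto_norm_atTop_atTop.comp Real.tendsto_log_atTop) htop hint] at htop
  have hzero : Tendsto W (𝓝[>] 0) (𝓝 (W 1 - ∫ t in (0:ℝ)..1, W' t)) := by
    have hint1 : IntegrableOn W' (uIcc (0:ℝ) 1) := by
      rw [uIcc_of_le zero_le_one, integrableOn_Icc_iff_integrableOn_Ioc]
      exact hW'.mono_set Ioc_subset_Ioi_self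
    have hc := (intervalIntegral.continuousOn_primitive_interval_left hint1) 0 (by simp)
    have hc' : Tendsto (fun x => ∫ t in x..1, W' t) (𝓝[>] 0) (𝓝 (∫ t in (0:ℝ)..1, W' t)) := by
      rw [← nhdsWithin_Ioo_eq_nhdsGT (zero_lt_one (α := ℝ))]
      refine hc.mono_left (nhdsWithin_mono _ ?_)
      rw [uIcc_of_le zero_le_one]
      exact Ioo_subset_Icc_self
    refine (hc'.const_sub (W 1)).congr' ?_
    filter_upwards [Ioo_mem_nhdsGT (zero_lt_one (α := ℝ))] with x hx
    rw [intervalIntegral.integral_eq_sub_of_hasDerivAt (f := W)]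
    · ring
    · intro y hy
      rw [uIcc_of_le hx.2.le] at hy
      exact hW y (hx.1.trans_le hy.1)
    · rw [intervalIntegrable_iff_integrableOn_Ioc_of_le hx.2.le]
      exact hW'.mono_set fun y hy => hx.1.trans hy.1
  rw [limit_eq_zero_of_integrableOn_div (𝓝[>] 0) self_mem_nhdsWithin
    (tendsto_abs_atBot_atTop.comp Real.tendsto_log_nhdsGT_zero) hzero hint] at hzero
  have h1 := integral_Ioi_deriv_mul_eq_sub (a := 0) (u := W) (u' := W') (v := fun _ => 1)
    (v' := fun _ => 0) (a' := 0) (b' := 0) hW (fun x _ => hasDerivAt_const x _)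
    (by simpa [Pi.mul_def, Pi.add_def] using hW') (by simpa [Pi.mul_def] using hzero)
    (by simpa [Pi.mul_def] using htop)
  simpa using h1

/-- Cauchy–Schwarz for the increment of a `C¹` function, uniformly in the order of `m` and `x`. -/
lemma sq_sub_le_mul_integral {h : ℝ → ℝ} (hh : ∀ x ∈ Ioi (0 : ℝ), HasDerivAt h (deriv h x) x)
    (hc : ContinuousOn (deriv h) (Ioi 0)) {m x : ℝ} (hm : 0 < m) (hx : 0 < x) :
    (h x - h m) ^ 2 ≤ (x - m) * ∫ t in m..x, deriv h t ^ 2 := by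
  have hsub : uIcc m x ⊆ Ioi 0 := fun y hy => (lt_min hm hx).trans_le hy.1
  have hi1 : IntervalIntegrable (deriv h) volume m x := (hc.mono hsub).intervalIntegrable
  have hi2 : IntervalIntegrable (fun t => deriv h t ^ 2) volume m x :=
    ((hc.mono hsub).pow 2).intervalIntegrable
  have hF : ∫ t in m..x, deriv h t = h x - h m :=
    intervalIntegral.integral_eq_sub_of_hasDerivAt (fun y hy => hh y (hsub hy)) hi1
  set F := ∫ t in m..x, deriv h t ^ 2 with hFdef
  rcases eq_or_ne x m with rfl | hne
  · simp
  have hne' : x - m ≠ 0 := sub_ne_zero.2 hne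
  set c := (h x - h m) / (x - m) with hcdef
  have hexp : ∫ t in m..x, (deriv h t - c) ^ 2 = F - 2 * c * (h x - h m) + (x - m) * c ^ 2 := by
    have : ∀ t, (deriv h t - c) ^ 2 = deriv h t ^ 2 - 2 * c * deriv h t + c ^ 2 := fun t => by ring
    simp_rw [this]
    rw [intervalIntegral.integral_add (hi2.sub (hi1.const_mul _)) (by simp),
      intervalIntegral.integral_sub hi2 (hi1.const_mul _), intervalIntegral.integral_const_mul, hF]
    simp [F]
  have hsq : (x - m) * ∫ t in m..x, (deriv h t - c) ^ 2 = (x - m) * F - (h x - h m) ^ 2 := by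
    rw [hexp, hcdef]; field_simp; ring
  have hnn : 0 ≤ (x - m) * ∫ t in m..x, (deriv h t - c) ^ 2 := by
    rcases le_total m x with hmx | hmx
    · exact mul_nonneg (by linarith)
        (intervalIntegral.integral_nonneg hmx fun _ _ => sq_nonneg _)
    · rw [intervalIntegral.integral_symm]
      exact mul_nonneg_of_nonpos_of_nonpos (by linarith)
        (neg_nonpos.2 (intervalIntegral.integral_nonneg hmx fun _ _ => sq_nonneg _))
  linarith

/-- The Poincaré-type bound around the mean `m = a / b`, truncated to `[ε, R]`. With
`F x = ∫ t in m..x, h' t ^ 2`, the boundary terms of `x p(x) F(x)` have a favourable sign, so they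
can be dropped without knowing their limits. -/
lemma truncated_poincare {a b : ℝ} (ha : 0 < a) (hb : 0 < b) {h : ℝ → ℝ}
    (hh : ∀ x ∈ Ioi (0 : ℝ), HasDerivAt h (deriv h x) x)
    (hc : ContinuousOn (deriv h) (Ioi 0))
    (hh'2 : IntegrableOn (fun x => x * deriv h x ^ 2 * gammaPdf a b x) (Ioi 0))
    {ε R : ℝ} (hε : 0 < ε) (hεm : ε ≤ a / b) (hR : a / b ≤ R) :
    ∫ x in ε..R, (h x - h (a / b)) ^ 2 * gammaPdf a b x ≤
      (1 / b) * ∫ x in Ioi (0 : ℝ), x * deriv h x ^ 2 * gammaPdf a b x := by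
  set m := a / b with hm
  have hm0 : 0 < m := by positivity
  have ham : a = b * m := by rw [hm]; field_simp
  have hεR : ε ≤ R := hεm.trans hR
  have hsub : uIcc ε R ⊆ Ioi 0 := fun y hy => by
    rw [uIcc_of_le hεR] at hy; exact hε.trans_le hy.1
  set F : ℝ → ℝ := fun x => ∫ t in m..x, deriv h t ^ 2 with hFdef
  have hF : ∀ x ∈ Ioi (0 : ℝ), HasDerivAt F (deriv h x ^ 2) x := by
    intro x hx
    have hs : uIcc m x ⊆ Ioi 0 := fun y hy => (lt_min hm0 hx).trans_le hy.1
    exact intervalIntegral.integral_hasDerivAt_right ((hc.mono hs).pow 2).intervalIntegrable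
      ((hc.pow 2).stronglyMeasurableAtFilter isOpen_Ioi x hx)
      ((hc.pow 2).continuousAt (Ioi_mem_nhds hx))
  have hpc := (continuousOn_gammaPdf a b).mono hsub
  have hcc := hc.mono hsub
  have hFc : ContinuousOn F (uIcc ε R) := fun x hx => (hF x (hsub hx)).continuousAt.continuousWithinAt
  have hhc : ContinuousOn h (uIcc ε R) := fun x hx => (hh x (hsub hx)).continuousAt.continuousWithinAt
  have hG : ∀ x ∈ uIcc ε R, HasDerivAt (fun x => x * gammaPdf a b x * F x)
      ((a - b * x) * gammaPdf a b x * F x + x * gammaPdf a b x * deriv h x ^ 2) x := fun x hx =>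
    (hasDerivAt_mul_gammaPdf a b (hsub hx)).mul (hF x (hsub hx))
  have hGi : IntervalIntegrable (fun x => (a - b * x) * gammaPdf a b x * F x +
      x * gammaPdf a b x * deriv h x ^ 2) volume ε R :=
    ContinuousOn.intervalIntegrable (by fun_prop)
  have hGint := intervalIntegral.integral_eq_sub_of_hasDerivAt hG hGi
  have hDi : IntervalIntegrable (fun x => x * deriv h x ^ 2 * gammaPdf a b x) volume ε R :=
    ContinuousOn.intervalIntegrable (by fun_prop)
  have hVi : IntervalIntegrable (fun x => (h x - h m) ^ 2 * gammaPdf a b x) volume ε R :=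
    ContinuousOn.intervalIntegrable (by fun_prop)
  have hFR : 0 ≤ F R := intervalIntegral.integral_nonneg hR fun _ _ => sq_nonneg _
  have hFε : F ε ≤ 0 := by
    simp only [hFdef]
    rw [intervalIntegral.integral_symm]
    exact neg_nonpos.2 (intervalIntegral.integral_nonneg hεm fun _ _ => sq_nonneg _)
  have hmono : ∫ x in ε..R, b * ((h x - h m) ^ 2 * gammaPdf a b x) ≤
      ∫ x in ε..R, (x * deriv h x ^ 2 * gammaPdf a b x - ((a - b * x) * gammaPdf a b x * F x +
      x * gammaPdf a b x * deriv h x ^ 2)) := by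
    refine intervalIntegral.integral_mono_on hεR (hVi.const_mul b) (hDi.sub hGi) fun x hx => ?_
    have hx0 : 0 < x := hε.trans_le hx.1
    have h1 := sq_sub_le_mul_integral hh hc hm0 hx0
    have h2 := gammaPdf_pos ha hb hx0
    have h3 := mul_le_mul_of_nonneg_right h1 (mul_pos hb h2).le
    calc _ = (h x - h m) ^ 2 * (b * gammaPdf a b x) := by ring
      _ ≤ _ := h3
      _ = _ := by rw [ham]; ring
  rw [intervalIntegral.integral_const_mul, intervalIntegral.integral_sub hDi hGi, hGint] at hmono
  have hset : ∫ x in ε..R, x * deriv h x ^ 2 * gammaPdf a b x ≤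
      ∫ x in Ioi (0 : ℝ), x * deriv h x ^ 2 * gammaPdf a b x := by
    rw [intervalIntegral.integral_of_le hεR]
    refine setIntegral_mono_set hh'2 ?_ (LE.le.eventuallyLE fun y hy => hε.trans hy.1)
    filter_upwards [ae_restrict_mem measurableSet_Ioi] with x hx
    have := gammaPdf_pos ha hb hx
    have hx' : 0 < x := hx
    simp only [Pi.zero_apply]
    positivity
  have hb1 : 0 ≤ R * gammaPdf a b R * F R :=
    mul_nonneg (mul_pos (hε.trans_le hεR) (gammaPdf_pos ha hb (hε.trans_le hεR))).le hFR
  have hb2 : ε * gammaPdf a b ε * F ε ≤ 0 :=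
    mul_nonpos_of_nonneg_of_nonpos (mul_pos hε (gammaPdf_pos ha hb hε)).le hFε
  rw [one_div, ← div_eq_inv_mul, le_div_iff₀ hb]
  linarith

/-- For square-integrable `h`, the functions `h` and `x h` are integrable against the Gamma
density, since `|h| ≤ h² + 1` and `|x h| ≤ x² + h²`. -/
lemma integrable_first_order {a b : ℝ} (ha : 0 < a) (hb : 0 < b) {h : ℝ → ℝ}
    (hc : ContinuousOn h (Ioi 0))
    (hh2 : IntegrableOn (fun x => h x ^ 2 * gammaPdf a b x) (Ioi 0)) :
    IntegrableOn (fun x => h x * gammaPdf a b x) (Ioi 0) ∧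
    IntegrableOn (fun x => x * h x * gammaPdf a b x) (Ioi 0) := by
  have hp := continuousOn_gammaPdf a b
  constructor
  · refine (hh2.add (gammaPdf_integral ha hb).1).mono'
      (ContinuousOn.aestronglyMeasurable (by fun_prop) measurableSet_Ioi) ?_
    filter_upwards [ae_restrict_mem measurableSet_Ioi] with x hx
    have hpos := gammaPdf_pos ha hb hx
    simp only [Pi.add_apply]
    rw [norm_mul, Real.norm_eq_abs, Real.norm_eq_abs, abs_of_pos hpos]
    have : |h x| ≤ h x ^ 2 + 1 := by
      rw [← sq_abs (h x)]; nlinarith [sq_nonneg (|h x| - 1), abs_nonneg (h x)]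
    nlinarith
  · refine (hh2.add (gammaPdf_second_moment ha hb).1).mono'
      (ContinuousOn.aestronglyMeasurable (by fun_prop) measurableSet_Ioi) ?_
    filter_upwards [ae_restrict_mem measurableSet_Ioi] with x hx
    have hpos := gammaPdf_pos ha hb hx
    simp only [Pi.add_apply]
    rw [norm_mul, Real.norm_eq_abs, Real.norm_eq_abs, abs_of_pos hpos]
    have : |x * h x| ≤ h x ^ 2 + x ^ 2 := by
      rw [abs_le]
      constructor <;> nlinarith [sq_nonneg (x + h x), sq_nonneg (x - h x), sq_nonneg x,
        sq_nonneg (h x)]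
    nlinarith

/-- Expansion of the weighted quadratic functional `E[(h(X) - k - l (bX - a))²]`, using
`E[bX - a] = 0` and `E[(bX - a)²] = a`. -/
lemma integral_sq_sub_affine {a b : ℝ} (ha : 0 < a) (hb : 0 < b) {h : ℝ → ℝ}
    (hc : ContinuousOn h (Ioi 0))
    (hh2 : IntegrableOn (fun x => h x ^ 2 * gammaPdf a b x) (Ioi 0)) (k l : ℝ) :
    IntegrableOn (fun x => (h x - k - l * (b * x - a)) ^ 2 * gammaPdf a b x) (Ioi 0) ∧
    ∫ x in Ioi (0 : ℝ), (h x - k - l * (b * x - a)) ^ 2 * gammaPdf a b x =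
      (∫ x in Ioi (0 : ℝ), h x ^ 2 * gammaPdf a b x)
        - 2 * k * (∫ x in Ioi (0 : ℝ), h x * gammaPdf a b x) + k ^ 2
        - 2 * l * (b * (∫ x in Ioi (0 : ℝ), x * h x * gammaPdf a b x)
          - a * ∫ x in Ioi (0 : ℝ), h x * gammaPdf a b x) + l ^ 2 * a := by
  obtain ⟨ih, ixh⟩ := integrable_first_order ha hb hc hh2
  obtain ⟨i0, e0⟩ := gammaPdf_integral ha hb
  obtain ⟨i1, e1⟩ := gammaPdf_mean ha hb
  obtain ⟨i2, e2⟩ := gammaPdf_second_moment ha hb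
  have heq : (fun x => (h x - k - l * (b * x - a)) ^ 2 * gammaPdf a b x) = fun x =>
      h x ^ 2 * gammaPdf a b x + (2 * l * a - 2 * k) * (h x * gammaPdf a b x)
      + (-2 * l * b) * (x * h x * gammaPdf a b x) + (k - l * a) ^ 2 * gammaPdf a b x
      + (2 * (k - l * a) * (l * b)) * (x * gammaPdf a b x)
      + (l * b) ^ 2 * (x ^ 2 * gammaPdf a b x) := by
    funext x; ring
  have j1 := hh2.add (ih.const_mul (2 * l * a - 2 * k))
  have j2 := j1.add (ixh.const_mul (-2 * l * b))
  have j3 := j2.add (i0.const_mul ((k - l * a) ^ 2))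
  have j4 := j3.add (i1.const_mul (2 * (k - l * a) * (l * b)))
  have j5 := j4.add (i2.const_mul ((l * b) ^ 2))
  rw [heq]
  simp only [Pi.add_def] at j1 j2 j3 j4 j5
  refine ⟨j5, ?_⟩
  rw [integral_add j4 (i2.const_mul _), integral_add j3 (i1.const_mul _),
    integral_add j2 (i0.const_mul _), integral_add j1 (ixh.const_mul _),
    integral_add hh2 (ih.const_mul _)]
  simp only [integral_const_mul]
  rw [e0, e1, e2]
  field_simp
  ring

/-- The Stein identity `E[X h'(X)] = E[(bX - a) h(X)]`, obtained by integrating the derivative of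
`x p(x) h(x)`. -/
lemma stein_identity_s18 {a b : ℝ} (ha : 0 < a) (hb : 0 < b) {h : ℝ → ℝ}
    (hh : ∀ x ∈ Ioi (0 : ℝ), HasDerivAt h (deriv h x) x)
    (hh2 : IntegrableOn (fun x => h x ^ 2 * gammaPdf a b x) (Ioi 0))
    (hh1 : IntegrableOn (fun x => x * deriv h x * gammaPdf a b x) (Ioi 0)) :
    ∫ x in Ioi (0 : ℝ), x * deriv h x * gammaPdf a b x =
      b * (∫ x in Ioi (0 : ℝ), x * h x * gammaPdf a b x)
          - a * ∫ x in Ioi (0 : ℝ), h x * gammaPdf a b x := by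
  have hc : ContinuousOn h (Ioi 0) := fun x hx => (hh x hx).continuousAt.continuousWithinAt
  obtain ⟨ih, ixh⟩ := integrable_first_order ha hb hc hh2
  have j1 := hh1.add (ih.const_mul a)
  have j2 := j1.sub (ixh.const_mul b)
  simp only [Pi.add_def, Pi.sub_def] at j1 j2
  have key := integral_Ioi_deriv_eq_zero (W := fun x => x * gammaPdf a b x * h x)
    (W' := fun x => x * deriv h x * gammaPdf a b x + a * (h x * gammaPdf a b x)
      - b * (x * h x * gammaPdf a b x))
    (fun x hx => ((hasDerivAt_mul_gammaPdf a b hx).mul (hh x hx)).congr_deriv (by ring)) j2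
    ((integrableOn_congr_fun (fun x hx => by
      have : x ≠ 0 := ne_of_gt hx
      field_simp) measurableSet_Ioi).2 ih)
  rw [integral_sub j1 (ixh.const_mul b), integral_add hh1 (ih.const_mul a),
    integral_const_mul, integral_const_mul] at key
  linarith

/-- The bound of `truncated_poincare` on the whole half-line. -/
lemma poincare_about_mean {a b : ℝ} (ha : 0 < a) (hb : 0 < b) {h : ℝ → ℝ}
    (hh : ∀ x ∈ Ioi (0 : ℝ), HasDerivAt h (deriv h x) x)
    (hc : ContinuousOn (deriv h) (Ioi 0))
    (hh'2 : IntegrableOn (fun x => x * deriv h x ^ 2 * gammaPdf a b x) (Ioi 0))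
    (hi : IntegrableOn (fun x => (h x - h (a / b)) ^ 2 * gammaPdf a b x) (Ioi 0)) :
    ∫ x in Ioi (0 : ℝ), (h x - h (a / b)) ^ 2 * gammaPdf a b x ≤
      (1 / b) * ∫ x in Ioi (0 : ℝ), x * deriv h x ^ 2 * gammaPdf a b x := by
  have hm0 : 0 < a / b := by positivity
  have hε : Tendsto (fun n : ℕ => (1 : ℝ) / (n + 1)) atTop (𝓝 0) :=
    tendsto_one_div_add_atTop_nhds_zero_nat
  have hcov : AECover (volume.restrict (Ioi (0 : ℝ))) atTop
      (fun n : ℕ => Ioc ((1 : ℝ) / (n + 1)) n) :=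
    (aecover_Ioi_of_Ioi hε).inter (aecover_Iic tendsto_natCast_atTop_atTop)
  refine le_of_tendsto (hcov.integral_tendsto_of_countably_generated hi) ?_
  filter_upwards [hε.eventually (gt_mem_nhds hm0),
    tendsto_natCast_atTop_atTop.eventually_ge_atTop (a / b)] with n hn1 hn2
  have hpos : (0 : ℝ) < 1 / (n + 1) := by positivity
  have := truncated_poincare ha hb hh hc hh'2 hpos hn1.le hn2
  rw [intervalIntegral.integral_of_le (hn1.le.trans hn2)] at this
  have hsub : Ioc ((1 : ℝ) / (n + 1)) n ⊆ Ioi 0 := fun y hy => hpos.trans hy.1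
  rwa [Measure.restrict_restrict measurableSet_Ioc, inter_eq_left.2 hsub]

/-- **Scale-based variance bounds for the Gamma distribution** (equation (3.12) of
Ley–Swan; the bounds of Klaassen (1985)). Let `X ∼ Gamma(a,b)` with `a, b > 0`. For
every continuously differentiable `h : (0,∞) → ℝ` with `E[h(X)²] < ∞`,
`E[|X h'(X)|] < ∞` and `E[X (h'(X))²] < ∞`,
`(1/a)(E[X h'(X)])² ≤ Var[h(X)] ≤ (1/b) E[X (h'(X))²]`, with equality if and only if
`h(x)` is proportional (up to additive constant) to `a − x`. -/
theorem gamma_scale_variance_bounds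
    (a b : ℝ) (ha : 0 < a) (hb : 0 < b)
    (h : ℝ → ℝ) (hh : ContDiffOn ℝ 1 h (Set.Ioi 0))
    (hh2 : IntegrableOn (fun x => h x ^ 2 * gammaPdf a b x) (Set.Ioi 0))
    (hh1 : IntegrableOn (fun x => x * deriv h x * gammaPdf a b x) (Set.Ioi 0))
    (hh'2 : IntegrableOn
      (fun x => x * (deriv h x) ^ 2 * gammaPdf a b x) (Set.Ioi 0)) :
    (1 / a) * (∫ x in Set.Ioi (0 : ℝ), x * deriv h x * gammaPdf a b x) ^ 2 ≤
      ∫ x in Set.Ioi (0 : ℝ),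
        (h x - ∫ y in Set.Ioi (0 : ℝ), h y * gammaPdf a b y) ^ 2 * gammaPdf a b x ∧
    ∫ x in Set.Ioi (0 : ℝ),
        (h x - ∫ y in Set.Ioi (0 : ℝ), h y * gammaPdf a b y) ^ 2 * gammaPdf a b x ≤
      (1 / b) * ∫ x in Set.Ioi (0 : ℝ), x * (deriv h x) ^ 2 * gammaPdf a b x ∧
    (((1 / a) * (∫ x in Set.Ioi (0 : ℝ), x * deriv h x * gammaPdf a b x) ^ 2 =
        ∫ x in Set.Ioi (0 : ℝ),
          (h x - ∫ y in Set.Ioi (0 : ℝ), h y * gammaPdf a b y) ^ 2 * gammaPdf a b x ∧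
      ∫ x in Set.Ioi (0 : ℝ),
          (h x - ∫ y in Set.Ioi (0 : ℝ), h y * gammaPdf a b y) ^ 2 * gammaPdf a b x =
        (1 / b) * ∫ x in Set.Ioi (0 : ℝ), x * (deriv h x) ^ 2 * gammaPdf a b x) ↔
      ∃ c d : ℝ, ∀ᵐ x : ℝ, 0 < x → h x = c * (a - x) + d) := by
  have hd : ∀ x ∈ Ioi (0 : ℝ), HasDerivAt h (deriv h x) x := fun x hx =>
    ((hh.differentiableOn one_ne_zero).differentiableAt (Ioi_mem_nhds hx)).hasDerivAt
  have hdc : ContinuousOn (deriv h) (Ioi 0) := hh.continuousOn_deriv_of_isOpen isOpen_Ioi le_rfl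
  have hc : ContinuousOn h (Ioi 0) := hh.continuousOn
  have hexp := integral_sq_sub_affine ha hb hc hh2
  have hstein := stein_identity_s18 ha hb hd hh2 hh1
  have hup := poincare_about_mean ha hb hd hdc hh'2 (by simpa using (hexp (h (a / b)) 0).1)
  have hup' := (hexp (h (a / b)) 0).2
  set M := ∫ x in Ioi (0 : ℝ), h x * gammaPdf a b x with hM
  set K := ∫ x in Ioi (0 : ℝ), x * deriv h x * gammaPdf a b x with hK
  have hV := (hexp M 0).2
  -- `K / a` minimises `l ↦ E[(h(X) - M - l (bX - a))²]`.
  obtain ⟨hQi, hQ⟩ := hexp M (K / a)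
  rw [← hstein] at hV hQ hup'
  simp only [zero_mul, sub_zero, mul_zero, ne_eq, OfNat.ofNat_ne_zero, not_false_eq_true, zero_pow,
    add_zero] at hV hup'
  set V := ∫ x in Ioi (0 : ℝ), (h x - M) ^ 2 * gammaPdf a b x
  set D := ∫ x in Ioi (0 : ℝ), x * deriv h x ^ 2 * gammaPdf a b x with hD
  have hnn : 0 ≤ᵐ[volume.restrict (Ioi (0 : ℝ))]
      fun x => (h x - M - K / a * (b * x - a)) ^ 2 * gammaPdf a b x := by
    filter_upwards [ae_restrict_mem measurableSet_Ioi] with x hx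
    exact mul_nonneg (sq_nonneg _) (gammaPdf_pos ha hb hx).le
  have hQV : ∫ x in Ioi (0 : ℝ), (h x - M - K / a * (b * x - a)) ^ 2 * gammaPdf a b x =
      V - 1 / a * K ^ 2 := by
    rw [hQ, hV]; field_simp; ring
  have hlow : 1 / a * K ^ 2 ≤ V := by
    have := integral_nonneg_of_ae hnn
    linarith
  have hupp : V ≤ 1 / b * D := by
    refine le_trans ?_ hup
    rw [hup', hV]
    nlinarith [sq_nonneg (M - h (a / b))]
  refine ⟨hlow, hupp, ?_, ?_⟩
  · rintro ⟨heq, -⟩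
    have h0 := (setIntegral_eq_zero_iff_of_nonneg_ae hnn hQi).1 (by rw [hQV]; linarith)
    refine ⟨-(K * b / a), M - K + K * b, ?_⟩
    have h1 := (ae_restrict_iff' measurableSet_Ioi).1 h0
    filter_upwards [h1] with x hx hx0
    have h2 := hx hx0
    have h3 := (gammaPdf_pos ha hb hx0).ne'
    simp only [Pi.zero_apply, mul_eq_zero, h3, or_false, ne_eq, OfNat.ofNat_ne_zero,
      not_false_eq_true, pow_eq_zero_iff] at h2
    have h4 : h x = M + K / a * (b * x - a) := by linarith
    rw [h4]; field_simp; ring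
  · rintro ⟨c, d, hcd⟩
    have hEq : EqOn h (fun x => c * (a - x) + d) (Ioi 0) :=
      Measure.eqOn_open_of_ae_eq (μ := volume)
        ((ae_restrict_iff' measurableSet_Ioi).2 hcd) isOpen_Ioi hc (by fun_prop)
    have hder : ∀ x ∈ Ioi (0 : ℝ), deriv h x = -c := by
      intro x hx
      rw [(hEq.eventuallyEq_of_mem (Ioi_mem_nhds hx)).deriv_eq]
      simp
    obtain ⟨-, e1⟩ := gammaPdf_mean ha hb
    have hKv : K = -c * (a / b) := by
      rw [hK, ← e1, ← integral_const_mul]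
      refine setIntegral_congr_fun measurableSet_Ioi fun x hx => ?_
      simp only [hder x hx]; ring
    have hDv : D = c ^ 2 * (a / b) := by
      rw [hD, ← e1, ← integral_const_mul]
      refine setIntegral_congr_fun measurableSet_Ioi fun x hx => ?_
      simp only [hder x hx]; ring
    -- The two extreme terms coincide, which pins the variance between them.
    have hKD : 1 / a * K ^ 2 = 1 / b * D := by
      rw [hKv, hDv]; field_simp
    exact ⟨le_antisymm hlow (hKD ▸ hupp), le_antisymm hupp (hKD ▸ hlow)⟩
end
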